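/- arXiv:1507.07696 — 6 statements merged into one kernel-verified Lean document; each statement's English description precedes it below -/
import Mathlib

section
/- Let N ≥ 1 and n ≥ 1 be integers and r_1, …, r_n real numbers. Define T_r f(x) = x f'(x) + r f(x), T = T_0, B_{r_1,…,r_n} f = T_{r_n} ∘ ⋯ ∘ T_{r_1} f, and A_N f(x) = (T^{N-1} f)'(x) (so that x · A_N f(x) = T^N f(x)). Then for every f : ℝ → ℝ that is (n + N) times continuously differentiable and every x ∈ ℝ, one has A_N (B_{r_1,…,r_n} f)(x) = B_{r_1+1,…,r_n+1} (A_N f)(x). -/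
/-!
The identity reduces to two facts about a single factor `T_r`, both valid on `C²` functions:
`T_0 T_r = T_r T_0` (`Tr_zero_comm`) and `(T_r f)' = T_{r+1} f'` (`deriv_Tr`). Moving `T_r` through
`T_0^{N-1}` and then through the derivative gives `A_N T_r = T_{r+1} A_N` (`Aop_Tr`), and induction
on the list of parameters gives the general case. Each factor `T_r` costs one derivative, so
`C^{n+N}` leaves enough regularity at every stage.
-/

/-- The Stein-type operator `T_r f (x) = x f'(x) + r f(x)`. -/
noncomputable def Tr (r : ℝ) (f : ℝ → ℝ) : ℝ → ℝ := fun x => x * deriv f x + r * f x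

/-- `B_{r₁,…,rₙ} f = T_{rₙ} ∘ ⋯ ∘ T_{r₁} f` (the first entry of the list acts first). -/
noncomputable def Bop : List ℝ → (ℝ → ℝ) → (ℝ → ℝ)
  | [], f => f
  | r :: rs, f => Bop rs (Tr r f)

/-- `A_N f (x) = (T^{N-1} f)'(x)`, where `T = T_0`, so that `x · A_N f(x) = T^N f(x)`. -/
noncomputable def Aop (N : ℕ) (f : ℝ → ℝ) : ℝ → ℝ := deriv ((Tr 0)^[N - 1] f)

theorem contDiff_Tr (r : ℝ) {k : ℕ} {f : ℝ → ℝ} (hf : ContDiff ℝ (k + 1 : ℕ) f) :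
    ContDiff ℝ k (Tr r f) := by
  have h1 : ContDiff ℝ k (deriv f) := by
    have h := hf
    push_cast at h
    exact (contDiff_succ_iff_deriv.1 h).2.2
  have h0 : ContDiff ℝ k f := hf.of_le (by exact_mod_cast Nat.le_succ k)
  exact (contDiff_id.mul h1).add (contDiff_const.mul h0)

theorem contDiff_iterate_Tr (m : ℕ) {k : ℕ} {f : ℝ → ℝ} (hf : ContDiff ℝ (k + m : ℕ) f) :
    ContDiff ℝ k ((Tr 0)^[m] f) := by
  induction m generalizing f with
  | zero => exact hf
  | succ m ih => exact ih (contDiff_Tr 0 hf)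

theorem deriv_Tr (r : ℝ) {f : ℝ → ℝ} (hf : ContDiff ℝ 2 f) :
    deriv (Tr r f) = Tr (r + 1) (deriv f) := by
  have h1 : Differentiable ℝ f := hf.differentiable (by norm_num)
  have h2 : Differentiable ℝ (deriv f) := by
    have h : ContDiff ℝ (1 + 1) f := by simpa [one_add_one_eq_two] using hf
    exact (contDiff_succ_iff_deriv.1 h).2.2.differentiable (by norm_num)
  funext x
  have h := ((hasDerivAt_id x).mul (h2 x).hasDerivAt).add ((h1 x).hasDerivAt.const_mul r)
  have h' : deriv (Tr r f) x = _ := h.deriv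
  rw [h']
  simp only [Tr, id]
  ring

theorem Tr_zero_comm (r : ℝ) {f : ℝ → ℝ} (hf : ContDiff ℝ 2 f) :
    Tr 0 (Tr r f) = Tr r (Tr 0 f) := by
  funext x
  change x * deriv (Tr r f) x + 0 * Tr r f x = x * deriv (Tr 0 f) x + r * Tr 0 f x
  rw [deriv_Tr r hf, deriv_Tr 0 hf]
  simp only [Tr]
  ring

theorem iterate_Tr_comm (r : ℝ) (m : ℕ) {f : ℝ → ℝ} (hf : ContDiff ℝ (m + 1 : ℕ) f) :
    (Tr 0)^[m] (Tr r f) = Tr r ((Tr 0)^[m] f) := by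
  induction m generalizing f with
  | zero => rfl
  | succ m ih =>
    have h2 : ContDiff ℝ 2 f := hf.of_le (by exact_mod_cast (by omega : 2 ≤ m + 1 + 1))
    rw [Function.iterate_succ_apply, Function.iterate_succ_apply, Tr_zero_comm r h2,
      ih (contDiff_Tr 0 hf)]

/-- `A_{m+1}` intertwines `T_r` with `T_{r+1}`. -/
theorem Aop_Tr (r : ℝ) (m : ℕ) {f : ℝ → ℝ} (hf : ContDiff ℝ (m + 2 : ℕ) f) :
    Aop (m + 1) (Tr r f) = Tr (r + 1) (Aop (m + 1) f) := by
  have h1 : ContDiff ℝ (m + 1 : ℕ) f := hf.of_le (by exact_mod_cast Nat.le_succ (m + 1))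
  have h2 : ContDiff ℝ (2 : ℕ) ((Tr 0)^[m] f) := contDiff_iterate_Tr m (by rwa [add_comm 2 m])
  simp only [Aop, Nat.add_sub_cancel]
  rw [iterate_Tr_comm r m h1, deriv_Tr r (by exact_mod_cast h2)]

theorem Aop_Bop_list (m : ℕ) (l : List ℝ) {f : ℝ → ℝ}
    (hf : ContDiff ℝ (l.length + (m + 1) : ℕ) f) :
    Aop (m + 1) (Bop l f) = Bop (l.map (· + 1)) (Aop (m + 1) f) := by
  induction l generalizing f with
  | nil => rfl
  | cons r l ih =>
    have hl : (r :: l).length + (m + 1) = l.length + (m + 1) + 1 := by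
      rw [List.length_cons]; omega
    rw [hl] at hf
    have h2 : ContDiff ℝ (m + 2 : ℕ) f :=
      hf.of_le (by exact_mod_cast (by omega : m + 2 ≤ l.length + (m + 1) + 1))
    rw [List.map_cons, Bop, Bop, ih (contDiff_Tr r hf), Aop_Tr r m h2]

/-- Commutation relation `A_N B_{r₁,…,rₙ} f = B_{r₁+1,…,rₙ+1} A_N f` for
`(n + N)` times continuously differentiable `f`. -/
theorem Aop_Bop_comm (N n : ℕ) (hN : 1 ≤ N) (hn : 1 ≤ n) (r : Fin n → ℝ) (f : ℝ → ℝ)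
    (hf : ContDiff ℝ (n + N) f) (x : ℝ) :
    Aop N (Bop (List.ofFn r) f) x = Bop (List.ofFn (fun i => r i + 1)) (Aop N f) x := by
  obtain ⟨m, rfl⟩ := Nat.exists_eq_add_of_le' hN
  have h : ContDiff ℝ ((List.ofFn r).length + (m + 1) : ℕ) f := by
    rw [List.length_ofFn]
    exact_mod_cast hf
  rw [Aop_Bop_list m _ h, List.map_ofFn]
  rfl
end

section
/- Let r > 0, λ > 0, q > 0 and let V be a real random variable with the generalised gamma distribution GG(r, λ, q), i.e. with density p(x) = (q λ^r / Γ(r/q)) x^{r−1} e^{−(λ x)^q} on (0, ∞). Then for every differentiable function f : (0,∞) → ℝ such that E|V f'(V)|, E|f(V)| and E|V^q f(V)| are finite, one has E[V f'(V) + (r − q λ^q V^q) f(V)] = 0. -/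
/-!
Let `p` be the density and `G x = x p(x) f(x)`. On `(0, ∞)` one has
`G' x = p(x) (x f'(x) + (r - q λ^q x^q) f(x))`, so the claim is `∫ G' = 0` over `(0, ∞)`.
The boundary terms are avoided by the substitution `x = e^t`: the function `h t = G (e^t)` has
derivative `e^t G'(e^t)`, and `h` is integrable on `ℝ` because `G x / x = p(x) f(x)` is integrable
on `(0, ∞)`. A differentiable function on `ℝ` which is integrable together with its derivative has
a derivative of integral zero (`integral_eq_zero_of_hasDerivAt_of_integrable`).
-/

open MeasureTheory ProbabilityTheory Set
open scoped NNReal ENNReal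

/-- The generalised gamma distribution `GG(r, λ, q)`: the measure on `ℝ` with Lebesgue density
`(q λ^r / Γ(r/q)) x^{r−1} e^{−(λx)^q}` on `(0, ∞)` and `0` elsewhere. -/
noncomputable def genGammaMeasure (r l q : ℝ) : Measure ℝ :=
  MeasureTheory.volume.withDensity (fun x => ENNReal.ofReal
    (if 0 < x then q * l ^ r / Real.Gamma (r / q) * x ^ (r - 1) * Real.exp (-(l * x) ^ q)
     else 0))

/-- The density of `GG(r, λ, q)` on `(0, ∞)`, without the cut-off on `(-∞, 0]`. -/
noncomputable def genGammaDensity (r l q x : ℝ) : ℝ :=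
  q * l ^ r / Real.Gamma (r / q) * x ^ (r - 1) * Real.exp (-(l * x) ^ q)

lemma genGammaDensity_nonneg {r l q x : ℝ} (hr : 0 < r) (hl : 0 < l) (hq : 0 < q) (hx : 0 < x) :
    0 ≤ genGammaDensity r l q x := by
  have := Real.Gamma_pos_of_pos (div_pos hr hq)
  unfold genGammaDensity
  positivity

lemma measurable_genGammaDensity (r l q : ℝ) : Measurable (genGammaDensity r l q) := by
  unfold genGammaDensity
  fun_prop

lemma genGammaMeasure_eq (r l q : ℝ) :
    genGammaMeasure r l q =
      (volume.restrict (Ioi 0)).withDensity fun x => ENNReal.ofReal (genGammaDensity r l q x) := by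
  rw [← withDensity_indicator measurableSet_Ioi]
  unfold genGammaMeasure
  congr 1
  ext x
  by_cases hx : 0 < x <;> simp [indicator, hx, genGammaDensity]

lemma integrable_genGammaMeasure_iff {r l q : ℝ} (hr : 0 < r) (hl : 0 < l) (hq : 0 < q)
    (g : ℝ → ℝ) :
    Integrable g (genGammaMeasure r l q) ↔
      IntegrableOn (fun x => genGammaDensity r l q x * g x) (Ioi 0) := by
  rw [genGammaMeasure_eq, integrable_withDensity_iff_integrable_smul'
    (measurable_genGammaDensity r l q).ennreal_ofReal (by simp)]
  refine integrable_congr ?_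
  filter_upwards [ae_restrict_mem measurableSet_Ioi] with x hx
  rw [ENNReal.toReal_ofReal (genGammaDensity_nonneg hr hl hq hx), smul_eq_mul]

lemma integral_genGammaMeasure {r l q : ℝ} (hr : 0 < r) (hl : 0 < l) (hq : 0 < q)
    (g : ℝ → ℝ) :
    ∫ x, g x ∂(genGammaMeasure r l q) = ∫ x in Ioi 0, genGammaDensity r l q x * g x := by
  rw [genGammaMeasure_eq, integral_withDensity_eq_integral_toReal_smul
    (measurable_genGammaDensity r l q).ennreal_ofReal (by simp)]
  refine setIntegral_congr_fun measurableSet_Ioi fun x hx => ?_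
  simp only [ENNReal.toReal_ofReal (genGammaDensity_nonneg hr hl hq hx), smul_eq_mul]

/-- Integration by parts on `(0, ∞)` without boundary conditions: integrability of `G x / x` is
integrability of `t ↦ G (e^t)` over `ℝ`, which together with integrability of `G'` forces `G` to
vanish at both ends. -/
lemma integral_Ioi_deriv_eq_zero {G G' : ℝ → ℝ} (hG : ∀ x ∈ Ioi (0 : ℝ), HasDerivAt G (G' x) x)
    (hG' : IntegrableOn G' (Ioi 0)) (hGx : IntegrableOn (fun x => x⁻¹ * G x) (Ioi 0)) :
    ∫ x in Ioi 0, G' x = 0 := by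
  have himg : Set.image Real.exp univ = Ioi 0 := by rw [image_univ, Real.range_exp]
  have hexp : ∀ t ∈ (univ : Set ℝ), HasDerivWithinAt Real.exp (Real.exp t) univ t :=
    fun t _ => (Real.hasDerivAt_exp t).hasDerivWithinAt
  rw [← himg] at hG' hGx ⊢
  rw [integrableOn_image_iff_integrableOn_abs_deriv_smul .univ hexp
    Real.exp_injective.injOn, integrableOn_univ] at hG' hGx
  rw [integral_image_eq_integral_abs_deriv_smul .univ hexp Real.exp_injective.injOn,
    setIntegral_univ]
  simp only [abs_of_pos (Real.exp_pos _), smul_eq_mul] at hG' hGx ⊢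
  refine integral_eq_zero_of_hasDerivAt_of_integrable (f := fun t => G (Real.exp t)) ?_ hG' ?_
  · intro t
    rw [mul_comm]
    exact (hG _ (Real.exp_pos t)).comp t (Real.hasDerivAt_exp t)
  · refine hGx.congr (.of_forall fun t => ?_)
    simp

lemma hasDerivAt_mul_genGammaDensity {r l q x : ℝ} (hl : 0 < l) (hx : 0 < x) :
    HasDerivAt (fun y => y * genGammaDensity r l q y)
      (genGammaDensity r l q x * (r - q * l ^ q * x ^ q)) x := by
  unfold genGammaDensity
  have h1 := Real.hasDerivAt_rpow_const (p := r - 1) (Or.inl hx.ne')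
  have h2 : HasDerivAt (fun y : ℝ => (l * y) ^ q) _ x :=
    ((hasDerivAt_id x).const_mul l).rpow_const (p := q) (Or.inl (mul_pos hl hx).ne')
  have h3 := (hasDerivAt_id x).mul
    ((h1.const_mul (q * l ^ r / Real.Gamma (r / q))).mul h2.neg.exp)
  refine h3.congr_deriv ?_
  simp only [id, Pi.mul_apply, Pi.neg_apply]
  rw [Real.rpow_sub_one hx.ne' (r - 1), Real.rpow_sub_one (mul_pos hl hx).ne' q,
    Real.mul_rpow hl.le hx.le]
  field_simp
  ring

/-- Stein characterising identity for the generalised gamma distribution `GG(r, λ, q)`: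
`E[V f'(V) + (r − q λ^q V^q) f(V)] = 0`. -/
theorem genGamma_stein_identity
    {Ω : Type*} [MeasureSpace Ω] [IsProbabilityMeasure (ℙ : Measure Ω)]
    (r l q : ℝ) (hr : 0 < r) (hl : 0 < l) (hq : 0 < q)
    (V : Ω → ℝ) (hVmeas : Measurable V)
    (hdist : Measure.map V ℙ = genGammaMeasure r l q)
    (f : ℝ → ℝ) (hf : DifferentiableOn ℝ f (Ioi 0))
    (hint1 : Integrable (fun ω => V ω * deriv f (V ω)))
    (hint2 : Integrable (fun ω => f (V ω)))
    (hint3 : Integrable (fun ω => (V ω) ^ q * f (V ω))) :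
    ∫ ω, (V ω * deriv f (V ω) + (r - q * l ^ q * (V ω) ^ q) * f (V ω)) = 0 := by
  -- `f` is arbitrary on `(-∞, 0]`, hence only a.e. measurable for the law of `V`.
  have hfm : AEStronglyMeasurable f (genGammaMeasure r l q) := by
    rw [genGammaMeasure_eq]
    exact (hf.continuousOn.aestronglyMeasurable measurableSet_Ioi).mono_ac
      (withDensity_absolutelyContinuous _ _)
  have hdm : Measurable fun x => x * deriv f x := measurable_id.mul (measurable_deriv f)
  have hqm : Measurable fun x : ℝ => x ^ q := by fun_prop
  have transfer : ∀ g : ℝ → ℝ, AEStronglyMeasurable g (genGammaMeasure r l q) →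
      Integrable (fun ω => g (V ω)) → Integrable g (genGammaMeasure r l q) := by
    intro g hg hgV
    rw [← hdist] at hg ⊢
    exact (integrable_map_measure hg hVmeas.aemeasurable).2 hgV
  have h1 := transfer _ hdm.aestronglyMeasurable hint1
  have h2 := transfer _ hfm hint2
  have h3 := transfer (fun x => x ^ q * f x) (hqm.aestronglyMeasurable.mul hfm) hint3
  have h4 : Integrable (fun x => x * deriv f x + (r - q * l ^ q * x ^ q) * f x)
      (genGammaMeasure r l q) := by
    refine (h1.add ((h2.const_mul r).sub (h3.const_mul (q * l ^ q)))).congr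
      (.of_forall fun x => ?_)
    simp only [Pi.add_apply, Pi.sub_apply]
    ring
  have hchange := integral_map (μ := (ℙ : Measure Ω)) hVmeas.aemeasurable
    (hdist ▸ h4.aestronglyMeasurable)
  rw [← hchange, hdist, integral_genGammaMeasure hr hl hq]
  rw [integrable_genGammaMeasure_iff hr hl hq] at h2 h4
  refine integral_Ioi_deriv_eq_zero (G := fun x => x * genGammaDensity r l q x * f x) ?_ h4 ?_
  · intro x hx
    have hfx := (hf.differentiableAt (Ioi_mem_nhds hx)).hasDerivAt
    refine ((hasDerivAt_mul_genGammaDensity hl hx).mul hfx).congr_deriv ?_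
    ring
  · refine h2.congr_fun (fun x hx => ?_) measurableSet_Ioi
    have hx0 : x ≠ 0 := (mem_Ioi.1 hx).ne'
    field_simp
end

section
/- Let r_1, r_2, λ > 0 and define w_1(x) = x^{−(r_1+r_2)/2} K_{r_1−r_2}(2λ√x) and w_2(x) = x^{−(r_1+r_2)/2} I_{|r_1−r_2|}(2λ√x) for x > 0, where K_ν(x) = ∫_0^∞ e^{−x cosh t} cosh(ν t) dt and I_ν(x) = Σ_{k=0}^∞ (x/2)^{ν+2k} / (Γ(ν+k+1) k!). Then w_1 and w_2 both solve the homogeneous differential equation x² w''(x) + (1 + r_1 + r_2) x w'(x) + (r_1 r_2 − λ² x) w(x) = 0 on (0, ∞). -/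
/-!
Both functions have the form `w(x) = x ^ p * F(x)`. Substituting this into the equation turns it
into `x² F'' + (1 + 2p + r₁ + r₂) x F' + ((p + r₁)(p + r₂) - l² x) F = 0` (`ode_rpow_mul`).

For `w₁` take `p = -(r₁ + r₂) / 2` and `F(x) = K_ν(2 l √x)` with `ν = r₁ - r₂`; what is needed is
Bessel's modified equation for `K_ν`. Differentiation under the integral sign brings down factors
`-cosh t`, so that with `J_n(z) = ∫ exp(-z cosh t) coshⁿ t cosh(ν t) dt` (`kMoment`) the equation is
`z² J₂ - z J₁ - (z² + ν²) J₀ = 0`. The integrand on the left is the `t`-derivative of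
`exp(-z cosh t) (-z sinh t cosh(ν t) - ν sinh(ν t))`, which vanishes at `0` and at `∞`
(`kMoment_ode`). All integrability and decay statements come from the Gaussian bound `kKernel_le`.

For `w₂`, with `ν = |r₁ - r₂|`, the series gives `I_ν(2 l √x) = l ^ ν x ^ (ν/2) S_ν(l² x)`, where
`S_ν(y) = ∑ yᵏ / (Γ(ν+k+1) k!)` (`iSeries`). Then `p = (ν - r₁ - r₂) / 2 = -min r₁ r₂` is a root
of `(p + r₁)(p + r₂)`, and the equation becomes `y S_ν'' + (ν + 1) S_ν' = S_ν`. As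
`S_ν' = S_{ν+1}` (`hasDerivAt_iSeries`), this is the three-term recurrence `iSeries_recurrence`.
-/

open Set

/-- The modified Bessel function of the second kind,
`K_ν(x) = ∫_0^∞ e^{−x cosh t} cosh(ν t) dt`. -/
noncomputable def besselK (ν x : ℝ) : ℝ :=
  ∫ t in Set.Ioi (0 : ℝ), Real.exp (-x * Real.cosh t) * Real.cosh (ν * t)

/-- The modified Bessel function of the first kind,
`I_ν(x) = Σ_{k=0}^∞ (x/2)^{ν+2k} / (Γ(ν+k+1) k!)`. -/
noncomputable def besselI (ν x : ℝ) : ℝ :=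
  ∑' k : ℕ, (1 / (Real.Gamma (ν + (k : ℝ) + 1) * (Nat.factorial k : ℝ)))
    * (x / 2) ^ (ν + 2 * (k : ℝ))

/-- `w₁(x) = x^{−(r₁+r₂)/2} K_{r₁−r₂}(2λ√x)`. -/
noncomputable def w₁ (r₁ r₂ l : ℝ) : ℝ → ℝ :=
  fun x => x ^ (-(r₁ + r₂) / 2) * besselK (r₁ - r₂) (2 * l * Real.sqrt x)

/-- `w₂(x) = x^{−(r₁+r₂)/2} I_{|r₁−r₂|}(2λ√x)`. -/
noncomputable def w₂ (r₁ r₂ l : ℝ) : ℝ → ℝ :=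
  fun x => x ^ (-(r₁ + r₂) / 2) * besselI |r₁ - r₂| (2 * l * Real.sqrt x)

open Filter Topology MeasureTheory

/-! ### Splitting off a power of `x` -/

/-- Reduction of the equation for `w = x ^ p * F` to an equation for `F`. -/
theorem ode_rpow_mul {F F1 F2 : ℝ → ℝ} {r₁ r₂ l p : ℝ} {w : ℝ → ℝ}
    (hw : ∀ x, 0 < x → w x = x ^ p * F x)
    (h1 : ∀ x, 0 < x → HasDerivAt F (F1 x) x)
    (h2 : ∀ x, 0 < x → HasDerivAt F1 (F2 x) x)
    (hode : ∀ x, 0 < x → x ^ 2 * F2 x + (1 + 2 * p + (r₁ + r₂)) * x * F1 x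
      + ((p + r₁) * (p + r₂) - l ^ 2 * x) * F x = 0) {x : ℝ} (hx : 0 < x) :
    x ^ 2 * deriv (deriv w) x + (1 + r₁ + r₂) * x * deriv w x
        + (r₁ * r₂ - l ^ 2 * x) * w x = 0 := by
  have hd1 : ∀ y, 0 < y → HasDerivAt w (p * y ^ (p - 1) * F y + y ^ p * F1 y) y := by
    intro y hy
    refine ((Real.hasDerivAt_rpow_const (Or.inl hy.ne')).mul (h1 y hy)).congr_of_eventuallyEq ?_
    filter_upwards [lt_mem_nhds hy] with z hz using hw z hz
  have hd2 : HasDerivAt (deriv w) ((p * ((p - 1) * x ^ (p - 1 - 1)) * F x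
      + p * x ^ (p - 1) * F1 x) + (p * x ^ (p - 1) * F1 x + x ^ p * F2 x)) x := by
    refine ((((Real.hasDerivAt_rpow_const (Or.inl hx.ne')).const_mul p).mul (h1 x hx)).add
      ((Real.hasDerivAt_rpow_const (Or.inl hx.ne')).mul (h2 x hx))).congr_of_eventuallyEq ?_
    filter_upwards [lt_mem_nhds hx] with z hz using (hd1 z hz).deriv
  rw [hd2.deriv, (hd1 x hx).deriv, hw x hx]
  have e1 : x ^ p = x ^ (p - 1 - 1) * x ^ 2 := by
    rw [← Real.rpow_natCast, ← Real.rpow_add hx]; congr 1; push_cast; ring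
  have e2 : x ^ (p - 1) = x ^ (p - 1 - 1) * x := by
    rw [← Real.rpow_add_one hx.ne']; congr 1; ring
  rw [e1, e2]
  linear_combination x ^ (p - 1 - 1) * x ^ 2 * hode x hx

/-! ### The function `K_ν` and its derivatives -/

/-- The integrand `exp(-x cosh t) coshⁿ t cosh(ν t)`; up to the sign `(-1)ⁿ`, the `n`-th
`x`-derivative of the integrand defining `K_ν(x)`. -/
noncomputable def kKernel (ν : ℝ) (n : ℕ) (x t : ℝ) : ℝ :=
  Real.exp (-x * Real.cosh t) * (Real.cosh t ^ n * Real.cosh (ν * t))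

theorem cosh_le_exp_abs (u : ℝ) : Real.cosh u ≤ Real.exp |u| := by
  rw [← Real.cosh_abs, Real.cosh_eq]
  have : Real.exp (-|u|) ≤ Real.exp |u| := Real.exp_le_exp.2 (by linarith [abs_nonneg u])
  linarith

theorem half_sq_le_cosh (t : ℝ) : t ^ 2 / 2 ≤ Real.cosh t := by
  rw [← Real.cosh_abs, ← sq_abs]
  have h := Real.self_le_sinh_iff.2 (show 0 ≤ |t| / 2 by positivity)
  have h2 : Real.cosh |t| = 1 + 2 * Real.sinh (|t| / 2) ^ 2 := by
    have := Real.cosh_two_mul (|t| / 2)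
    rw [Real.cosh_sq, mul_div_cancel₀ _ (two_ne_zero)] at this
    linarith
  rw [h2]
  nlinarith [abs_nonneg t]

theorem kKernel_nonneg (ν : ℝ) (n : ℕ) (x t : ℝ) : 0 ≤ kKernel ν n x t := by
  unfold kKernel
  have := Real.cosh_pos t
  have := Real.cosh_pos (ν * t)
  positivity

/-- Gaussian domination, from `coshⁿ t cosh(ν t) ≤ exp((n + |ν|) |t|)` and `cosh t ≥ t² / 2`. -/
theorem kKernel_le (ν : ℝ) (n : ℕ) {x : ℝ} (hx : 0 < x) (t : ℝ) :
    kKernel ν n x t ≤ Real.exp ((n + |ν|) ^ 2 / x) * Real.exp (-(x / 4) * t ^ 2) := by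
  have h1 : Real.cosh t ^ n * Real.cosh (ν * t) ≤ Real.exp ((n + |ν|) * |t|) := by
    calc _ ≤ Real.exp |t| ^ n * Real.exp |ν * t| := by
          have := Real.cosh_pos t
          have := Real.cosh_pos (ν * t)
          gcongr <;> exact cosh_le_exp_abs _
      _ = _ := by rw [← Real.exp_nat_mul, ← Real.exp_add, abs_mul]; ring_nf
  unfold kKernel
  calc _ ≤ Real.exp (-x * Real.cosh t) * Real.exp ((n + |ν|) * |t|) := by gcongr
    _ ≤ _ := by
      rw [← Real.exp_add, ← Real.exp_add]
      apply Real.exp_le_exp.2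
      have h2 := mul_le_mul_of_nonneg_left (half_sq_le_cosh t) hx.le
      -- completing the square in `|t|`
      have h3 : 0 ≤ (x * |t| / 2 - (n + |ν|)) ^ 2 / x := by positivity
      have h4 : (x * |t| / 2 - (n + |ν|)) ^ 2 / x
          = x / 4 * t ^ 2 - (n + |ν|) * |t| + (n + |ν|) ^ 2 / x := by
        rw [← sq_abs t]; field_simp; ring
      linarith

theorem continuous_kKernel (ν : ℝ) (n : ℕ) (x : ℝ) : Continuous (kKernel ν n x) := by
  unfold kKernel
  have := Real.continuous_cosh
  fun_prop

theorem integrable_kKernel (ν : ℝ) (n : ℕ) {x : ℝ} (hx : 0 < x) :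
    Integrable (kKernel ν n x) (volume.restrict (Ioi 0)) := by
  refine Integrable.mono' (g := fun t => Real.exp ((n + |ν|) ^ 2 / x) * Real.exp (-(x / 4) * t ^ 2))
    (((integrable_exp_neg_mul_sq (by positivity)).const_mul _).restrict)
    (continuous_kKernel ν n x).aestronglyMeasurable (ae_of_all _ fun t => ?_)
  rw [Real.norm_of_nonneg (kKernel_nonneg ν n x t)]
  exact kKernel_le ν n hx t

theorem tendsto_kKernel (ν : ℝ) (n : ℕ) {x : ℝ} (hx : 0 < x) :
    Tendsto (kKernel ν n x) atTop (𝓝 0) := by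
  refine squeeze_zero (kKernel_nonneg ν n x) (kKernel_le ν n hx) ?_
  rw [← mul_zero (Real.exp ((n + |ν|) ^ 2 / x))]
  refine Tendsto.const_mul _ (Real.tendsto_exp_atBot.comp ?_)
  exact (tendsto_pow_atTop two_ne_zero).const_mul_atTop_of_neg (by linarith)

/-- The integral of `kKernel ν n x` over `(0, ∞)`, which is `(-1)ⁿ` times the `n`-th derivative of
`K_ν` at `x > 0`. -/
noncomputable def kMoment (ν : ℝ) (n : ℕ) (x : ℝ) : ℝ :=
  ∫ t in Ioi (0 : ℝ), kKernel ν n x t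

theorem besselK_eq (ν : ℝ) : besselK ν = kMoment ν 0 := by
  ext x; simp [besselK, kMoment, kKernel]

theorem hasDerivAt_kMoment (ν : ℝ) (n : ℕ) {x : ℝ} (hx : 0 < x) :
    HasDerivAt (kMoment ν n) (-kMoment ν (n + 1) x) x := by
  have h := (hasDerivAt_integral_of_dominated_loc_of_deriv_le (μ := volume.restrict (Ioi (0:ℝ)))
    (F := kKernel ν n) (F' := fun y t => -kKernel ν (n + 1) y t)
    (bound := kKernel ν (n + 1) (x / 2)) (s := Ioi (x / 2)) (x₀ := x)
    (Ioi_mem_nhds (by linarith))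
    (Eventually.of_forall fun y => (continuous_kKernel ν n y).aestronglyMeasurable)
    (integrable_kKernel ν n hx)
    (continuous_kKernel ν (n + 1) x).neg.aestronglyMeasurable
    (ae_of_all _ fun t y hy => ?_) (integrable_kKernel ν (n + 1) (by positivity))
    (ae_of_all _ fun t y _ => ?_)).2
  · rw [integral_neg] at h
    exact h
  · rw [norm_neg, Real.norm_of_nonneg (kKernel_nonneg ν _ y t)]
    unfold kKernel
    have h1 := Real.cosh_pos t
    have h2 := Real.cosh_pos (ν * t)
    have : x / 2 ≤ y := le_of_lt hy
    gcongr
  · unfold kKernel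
    have := (((hasDerivAt_id y).neg.mul_const (Real.cosh t)).exp).mul_const
      (Real.cosh t ^ n * Real.cosh (ν * t))
    refine this.congr_deriv ?_
    simp only [id, Pi.neg_apply]
    ring

/-- Bessel's modified equation for `K_ν`: the integrand of the left-hand side is an exact
`t`-derivative, of a function vanishing at both ends of `(0, ∞)`. -/
theorem kMoment_ode (ν : ℝ) {x : ℝ} (hx : 0 < x) :
    x ^ 2 * kMoment ν 2 x - x * kMoment ν 1 x - (x ^ 2 + ν ^ 2) * kMoment ν 0 x = 0 := by
  set G : ℝ → ℝ := fun t => Real.exp (-x * Real.cosh t) *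
    (-x * Real.sinh t * Real.cosh (ν * t) - ν * Real.sinh (ν * t)) with hG
  have hi2 := (integrable_kKernel ν 2 hx).const_mul (x ^ 2)
  have hi1 := (integrable_kKernel ν 1 hx).const_mul x
  have hi0 := (integrable_kKernel ν 0 hx).const_mul (x ^ 2 + ν ^ 2)
  have hderiv : ∀ t, HasDerivAt G (x ^ 2 * kKernel ν 2 x t - x * kKernel ν 1 x t
      - (x ^ 2 + ν ^ 2) * kKernel ν 0 x t) t := by
    intro t
    have hν : HasDerivAt (fun t : ℝ => ν * t) ν t := by
      simpa using (hasDerivAt_id t).const_mul ν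
    have := ((Real.hasDerivAt_cosh t).const_mul (-x)).exp.mul
      ((((Real.hasDerivAt_sinh t).const_mul (-x)).mul hν.cosh).sub (hν.sinh.const_mul ν))
    refine this.congr_deriv ?_
    simp only [kKernel, Pi.mul_apply, Pi.sub_apply]
    linear_combination (-x ^ 2 * Real.exp (-x * Real.cosh t) * Real.cosh (ν * t)) * Real.cosh_sq t
  have hlim : Tendsto G atTop (𝓝 0) := by
    have hb := ((tendsto_kKernel ν 1 hx).const_mul x).add ((tendsto_kKernel ν 0 hx).const_mul |ν|)
    rw [mul_zero, mul_zero, add_zero] at hb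
    refine squeeze_zero_norm (fun t => ?_) hb
    have hs : ∀ u, |Real.sinh u| ≤ Real.cosh u := fun u => by
      rw [Real.abs_sinh, ← Real.cosh_abs]; exact (Real.sinh_lt_cosh _).le
    have hc := Real.cosh_pos (ν * t)
    rw [hG, Real.norm_eq_abs, abs_mul, Real.abs_exp]
    calc _ ≤ Real.exp (-x * Real.cosh t) *
          (x * Real.cosh t * Real.cosh (ν * t) + |ν| * Real.cosh (ν * t)) := by
          refine mul_le_mul_of_nonneg_left ((abs_sub _ _).trans ?_) (Real.exp_pos _).le
          rw [abs_mul, abs_mul, abs_mul, abs_neg, abs_of_pos hx, abs_of_pos hc]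
          gcongr <;> exact hs _
      _ = _ := by simp only [kKernel]; ring
  have h := integral_Ioi_of_hasDerivAt_of_tendsto' (a := 0) (fun t _ => hderiv t)
    ((hi2.sub hi1).sub hi0) hlim
  have hi21 : Integrable (fun t => x ^ 2 * kKernel ν 2 x t - x * kKernel ν 1 x t)
      (volume.restrict (Ioi 0)) := hi2.sub hi1
  rw [integral_sub hi21 hi0, integral_sub hi2 hi1, integral_const_mul,
    integral_const_mul, integral_const_mul] at h
  simpa [hG, kMoment] using h

theorem w₁_solves (r₁ r₂ l : ℝ) (hl : 0 < l) {x : ℝ} (hx : 0 < x) :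
    x ^ 2 * deriv (deriv (w₁ r₁ r₂ l)) x + (1 + r₁ + r₂) * x * deriv (w₁ r₁ r₂ l) x
        + (r₁ * r₂ - l ^ 2 * x) * w₁ r₁ r₂ l x = 0 := by
  set ν := r₁ - r₂ with hν
  have hz : ∀ y, 0 < y → HasDerivAt (fun y => 2 * l * √y) (l / √y) y := fun y hy => by
    refine ((Real.hasDerivAt_sqrt hy.ne').const_mul (2 * l)).congr_deriv ?_
    field_simp
  have hM : ∀ n y, 0 < y → HasDerivAt (fun y => kMoment ν n (2 * l * √y))
      (-kMoment ν (n + 1) (2 * l * √y) * (l / √y)) y := fun n y hy =>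
    HasDerivAt.comp (h₂ := kMoment ν n) y (hasDerivAt_kMoment ν n (by positivity)) (hz y hy)
  refine ode_rpow_mul (p := -(r₁ + r₂) / 2) (F := fun y => kMoment ν 0 (2 * l * √y))
    (F1 := fun y => -kMoment ν 1 (2 * l * √y) * (l / √y))
    (F2 := fun y => kMoment ν 2 (2 * l * √y) * (l ^ 2 / y)
      + kMoment ν 1 (2 * l * √y) * (l / (2 * y * √y)))
    (fun y _ => by rw [w₁, besselK_eq]) (hM 0) (fun y hy => ?_) (fun y hy => ?_) hx
  · have hs : 0 < √y := Real.sqrt_pos.2 hy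
    have hq : √y ^ 2 = y := Real.sq_sqrt hy.le
    refine ((hM 1 y hy).neg.mul
      ((Real.hasDerivAt_sqrt hy.ne').inv hs.ne' |>.const_mul l)).congr_deriv ?_
    simp only [Pi.neg_apply, Pi.inv_apply]
    rw [← hq, Real.sqrt_sq hs.le]
    field_simp
  · have hs : 0 < √y := Real.sqrt_pos.2 hy
    have hq : √y ^ 2 = y := Real.sq_sqrt hy.le
    have h := kMoment_ode ν (x := 2 * l * √y) (by positivity)
    generalize kMoment ν 0 (2 * l * √y) = a at *
    generalize kMoment ν 1 (2 * l * √y) = b at *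
    generalize kMoment ν 2 (2 * l * √y) = c at *
    generalize √y = s at *
    subst hq
    field_simp
    rw [hν] at h
    linear_combination h

/-! ### The power series behind `I_ν` -/

/-- The coefficient `1 / (Γ(ν + k + 1) k!)` of the series of `I_ν`. -/
noncomputable def iCoeff (ν : ℝ) (k : ℕ) : ℝ := 1 / (Real.Gamma (ν + k + 1) * k.factorial)

/-- The entire function `S_ν(y) = ∑ yᵏ / (Γ(ν + k + 1) k!)`, for which
`I_ν(z) = (z/2) ^ ν * S_ν((z/2)²)`. -/
noncomputable def iSeries (ν y : ℝ) : ℝ := ∑' k : ℕ, iCoeff ν k * y ^ k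

theorem iCoeff_nonneg {ν : ℝ} (hν : 0 ≤ ν) (k : ℕ) : 0 ≤ iCoeff ν k := by
  have : 0 < Real.Gamma (ν + k + 1) := Real.Gamma_pos_of_pos (by positivity)
  unfold iCoeff; positivity

/-- Holds since `Γ(ν + k + 1)` is nondecreasing in `k` when `ν ≥ 0`. -/
theorem iCoeff_le {ν : ℝ} (hν : 0 ≤ ν) (k : ℕ) :
    iCoeff ν k ≤ 1 / Real.Gamma (ν + 1) * (1 / k.factorial) := by
  have h0 : 0 < Real.Gamma (ν + 1) := Real.Gamma_pos_of_pos (by positivity)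
  have h : Real.Gamma (ν + 1) ≤ Real.Gamma (ν + k + 1) := by
    induction k with
    | zero => simp
    | succ k ih =>
      rw [show ν + ((k + 1 : ℕ) : ℝ) + 1 = (ν + k + 1) + 1 by push_cast; ring,
        Real.Gamma_add_one (s := ν + k + 1) (by positivity)]
      nlinarith [mul_nonneg (show 0 ≤ ν + k by positivity) (h0.le.trans ih)]
  rw [iCoeff, one_div_mul_one_div]
  gcongr

theorem summable_iSeries {ν : ℝ} (hν : 0 ≤ ν) (y : ℝ) :
    Summable fun k => iCoeff ν k * y ^ k := by
  refine Summable.of_norm_bounded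
    ((Real.summable_pow_div_factorial |y|).mul_left (1 / Real.Gamma (ν + 1))) fun k => ?_
  rw [norm_mul, norm_pow, Real.norm_of_nonneg (iCoeff_nonneg hν k), Real.norm_eq_abs]
  calc _ ≤ 1 / Real.Gamma (ν + 1) * (1 / k.factorial) * |y| ^ k := by
        gcongr; exact iCoeff_le hν k
    _ = _ := by ring

theorem iCoeff_succ (ν : ℝ) (k : ℕ) : (k + 1 : ℕ) * iCoeff ν (k + 1) = iCoeff (ν + 1) k := by
  have : (k.factorial : ℝ) ≠ 0 := by positivity
  rw [iCoeff, iCoeff, Nat.factorial_succ,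
    show ν + ((k + 1 : ℕ) : ℝ) + 1 = ν + 1 + k + 1 by push_cast; ring]
  push_cast
  have : (k + 1 : ℝ) ≠ 0 := by positivity
  field_simp

theorem hasDerivAt_iSeries {ν : ℝ} (hν : 0 ≤ ν) (y : ℝ) :
    HasDerivAt (iSeries ν) (iSeries (ν + 1) y) y := by
  set g' : ℕ → ℝ → ℝ := fun k z => iCoeff ν k * (k * z ^ (k - 1)) with hg'
  have hshift : ∀ k z, g' (k + 1) z = iCoeff (ν + 1) k * z ^ k := fun k z => by
    simp only [hg', ← iCoeff_succ, Nat.add_sub_cancel]; ring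
  have hsum : ∀ z, Summable fun k => g' k z := fun z => by
    rw [← summable_nat_add_iff 1]
    simp only [hshift]
    exact summable_iSeries (by positivity) z
  -- Termwise differentiation on the ball of radius `|y| + 1`, where `|g' k z| ≤ g' k (|y| + 1)`.
  have h := hasDerivAt_tsum_of_isPreconnected (y₀ := y) (y := y) (g := fun k z => iCoeff ν k * z ^ k)
    (g' := g') (hsum (|y| + 1)) Metric.isOpen_ball
    (convex_ball (0 : ℝ) (|y| + 1)).isPreconnected
    (fun k z _ => (hasDerivAt_pow k z).const_mul _)
    (fun k z hz => ?_) (by simp) (summable_iSeries hν y) (by simp)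
  · rw [(hsum y).tsum_eq_zero_add] at h
    simp only [hshift] at h
    have h0 : g' 0 y = 0 := by simp [hg']
    rw [h0, zero_add] at h
    exact h
  · have hz' : |z| ≤ |y| + 1 := by simpa using (mem_ball_zero_iff.1 hz).le
    rw [hg', norm_mul, norm_mul, norm_pow, Real.norm_of_nonneg (iCoeff_nonneg hν k),
      Real.norm_natCast, Real.norm_eq_abs]
    have := iCoeff_nonneg hν k
    dsimp only
    gcongr

/-- In view of `hasDerivAt_iSeries`, this is the equation `y S'' + (ν + 1) S' = S` for `S_ν`. -/
theorem iSeries_recurrence {ν : ℝ} (hν : 0 ≤ ν) (y : ℝ) :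
    y * iSeries (ν + 1 + 1) y + (ν + 1) * iSeries (ν + 1) y = iSeries ν y := by
  have s0 := summable_iSeries hν y
  have s1 := summable_iSeries (show 0 ≤ ν + 1 by positivity) y
  have s2 := summable_iSeries (show 0 ≤ ν + 1 + 1 by positivity) y
  have hg : Real.Gamma (ν + 1 + 1) = (ν + 1) * Real.Gamma (ν + 1) :=
    Real.Gamma_add_one (by positivity)
  unfold iSeries
  rw [s0.tsum_eq_zero_add, s1.tsum_eq_zero_add, mul_add, ← tsum_mul_left, ← tsum_mul_left,
    add_left_comm, ← Summable.tsum_add (s2.mul_left y)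
      (((summable_nat_add_iff 1).2 s1).mul_left (ν + 1))]
  congr 1
  · have : Real.Gamma (ν + 1) ≠ 0 := (Real.Gamma_pos_of_pos (by positivity)).ne'
    simp only [iCoeff, Nat.cast_zero, add_zero, hg]
    field_simp
  · refine tsum_congr fun k => ?_
    have hG : Real.Gamma (ν + 1 + (k + 1 : ℕ) + 1) =
        (ν + (k + 1 : ℕ) + 1) * Real.Gamma (ν + (k + 1 : ℕ) + 1) := by
      rw [← Real.Gamma_add_one (by positivity)]; congr 1; ring
    have h : iCoeff ν (k + 1) = (ν + (k + 1 : ℕ) + 1) * iCoeff (ν + 1) (k + 1) := by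
      have : (ν + (k + 1 : ℕ) + 1) ≠ 0 := by positivity
      rw [iCoeff, iCoeff, hG]
      field_simp
    rw [h, ← iCoeff_succ]
    push_cast
    ring

theorem besselI_eq (ν : ℝ) {z : ℝ} (hz : 0 < z) :
    besselI ν z = (z / 2) ^ ν * iSeries ν ((z / 2) ^ 2) := by
  rw [besselI, iSeries, ← tsum_mul_left]
  refine tsum_congr fun k => ?_
  rw [Real.rpow_add (by positivity), Real.rpow_mul (by positivity), Real.rpow_natCast, iCoeff,
    Real.rpow_two]
  ring

theorem w₂_solves (r₁ r₂ l : ℝ) (hl : 0 < l) {x : ℝ} (hx : 0 < x) :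
    x ^ 2 * deriv (deriv (w₂ r₁ r₂ l)) x + (1 + r₁ + r₂) * x * deriv (w₂ r₁ r₂ l) x
        + (r₁ * r₂ - l ^ 2 * x) * w₂ r₁ r₂ l x = 0 := by
  set ν := |r₁ - r₂| with hν
  have hν0 : 0 ≤ ν := abs_nonneg _
  have hlin : ∀ y, HasDerivAt (fun y : ℝ => l ^ 2 * y) (l ^ 2) y := fun y => by
    simpa using (hasDerivAt_id y).const_mul (l ^ 2)
  refine ode_rpow_mul (p := -(r₁ + r₂) / 2 + ν / 2)
    (F := fun y => l ^ ν * iSeries ν (l ^ 2 * y))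
    (F1 := fun y => l ^ ν * (iSeries (ν + 1) (l ^ 2 * y) * l ^ 2))
    (F2 := fun y => l ^ ν * (iSeries (ν + 1 + 1) (l ^ 2 * y) * l ^ 2 * l ^ 2))
    (fun y hy => ?_)
    (fun y _ => ((hasDerivAt_iSeries hν0 _).comp y (hlin y)).const_mul _)
    (fun y _ => (((hasDerivAt_iSeries (by positivity) _).comp y (hlin y)).mul_const _).const_mul _)
    (fun y hy => ?_) hx
  · have hs : 0 < √y := Real.sqrt_pos.2 hy
    rw [w₂, besselI_eq _ (by positivity), show 2 * l * √y / 2 = l * √y by ring, mul_pow,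
      Real.sq_sqrt hy.le, Real.mul_rpow hl.le hs.le, Real.sqrt_eq_rpow, ← Real.rpow_mul hy.le,
      Real.rpow_add hy, ← hν, show 1 / 2 * ν = ν / 2 by ring]
    ring
  · have hq : (-(r₁ + r₂) / 2 + ν / 2 + r₁) * (-(r₁ + r₂) / 2 + ν / 2 + r₂) = 0 := by
      have : ν ^ 2 = (r₁ - r₂) ^ 2 := sq_abs _
      linear_combination this / 4
    have h := iSeries_recurrence hν0 (l ^ 2 * y)
    simp only [hq]
    linear_combination (l ^ ν * l ^ 2 * y) * h

/-- `w₁` and `w₂` solve the homogeneous equation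
`x² w'' + (1 + r₁ + r₂) x w' + (r₁ r₂ − λ² x) w = 0` on `(0, ∞)`. -/
theorem w_solves_homogeneous (r₁ r₂ l : ℝ) (hr₁ : 0 < r₁) (hr₂ : 0 < r₂) (hl : 0 < l) :
    ∀ x ∈ Set.Ioi (0 : ℝ),
      (x ^ 2 * deriv (deriv (w₁ r₁ r₂ l)) x + (1 + r₁ + r₂) * x * deriv (w₁ r₁ r₂ l) x
        + (r₁ * r₂ - l ^ 2 * x) * w₁ r₁ r₂ l x = 0) ∧
      (x ^ 2 * deriv (deriv (w₂ r₁ r₂ l)) x + (1 + r₁ + r₂) * x * deriv (w₂ r₁ r₂ l) x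
        + (r₁ * r₂ - l ^ 2 * x) * w₂ r₁ r₂ l x = 0) :=
  fun _ hx => ⟨w₁_solves r₁ r₂ l hl hx, w₂_solves r₁ r₂ l hl hx⟩
end

section
/- Let r_1, r_2, λ > 0 and let w_1(x) = x^{−(r_1+r_2)/2} K_{r_1−r_2}(2λ√x) and w_2(x) = x^{−(r_1+r_2)/2} I_{|r_1−r_2|}(2λ√x) for x > 0. If A, B ∈ ℝ are such that the function w = A w_1 + B w_2 is bounded on (0, ∞), then A = B = 0. Consequently, any two bounded solutions on (0,∞) of x² f''(x) + (1 + r_1 + r_2) x f'(x) + (r_1 r_2 − λ² x) f(x) = g(x), for a given function g, whose difference is a linear combination of w_1 and w_2, coincide. -/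
/-!
The point is that `w₁` and `w₂` are unbounded at opposite ends of `(0, ∞)`.

* At infinity, `K_ν` is positive and decreasing (`besselK_anti`), so `w₁` stays bounded on
  `[1, ∞)`, whereas `w₂` grows at least linearly (`w₂_lower`): all terms of the series of `I_ν` are
  nonnegative for `ν ≥ 0`, so one term of large index `k` bounds it below by a multiple of `x ^ k`,
  which beats the factor `x ^ (-(r₁ + r₂) / 2)`. Hence boundedness forces `B = 0`.
* At zero, `K_ν(2λ√x) ≥ K_ν(2λ) > 0` for `x ≤ 1`, so `w₁` is at least a positive multiple of
  `x ^ (-(r₁ + r₂) / 2)`, which blows up. Hence boundedness forces `A = 0`.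

The uniqueness claim is the first one applied to the difference of the two bounded solutions.
-/

open Set

open MeasureTheory

/-- The integrand of `K_ν(x)` is dominated by a Gaussian, since `cosh t ≥ t² / 4` and
`|ν| t ≤ x t² / 8 + 2 ν² / x`. -/
lemma besselK_integrable (ν x : ℝ) (hx : 0 < x) :
    IntegrableOn (fun t => Real.exp (-x * Real.cosh t) * Real.cosh (ν * t)) (Set.Ioi 0) := by
  have hg : Integrable (fun t : ℝ => Real.exp (2 * ν ^ 2 / x) * Real.exp (-(x / 8) * t ^ 2)) :=
    (integrable_exp_neg_mul_sq (by positivity)).const_mul _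
  refine Integrable.mono' hg.integrableOn (Continuous.aestronglyMeasurable (by fun_prop)) ?_
  filter_upwards [ae_restrict_mem measurableSet_Ioi] with t ht
  have ht0 : 0 ≤ t := le_of_lt ht
  rw [Real.norm_of_nonneg (mul_nonneg (Real.exp_pos _).le (Real.cosh_pos _).le)]
  have h1 : Real.cosh (ν * t) ≤ Real.exp (|ν| * t) := by
    rw [← Real.cosh_abs, abs_mul, abs_of_nonneg ht0, Real.cosh_eq]
    have : Real.exp (-(|ν| * t)) ≤ Real.exp (|ν| * t) :=
      Real.exp_le_exp.2 (by have : 0 ≤ |ν| * t := by positivity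
                            linarith)
    linarith
  have h2 : t ^ 2 / 4 ≤ Real.cosh t := by
    rw [Real.cosh_eq]
    have := Real.quadratic_le_exp_of_nonneg ht0
    have := Real.exp_pos (-t)
    linarith
  have h3 : |ν| * t ≤ x / 8 * t ^ 2 + 2 * ν ^ 2 / x := by
    have hsq : 0 ≤ (x * t - 4 * |ν|) ^ 2 / (8 * x) := by positivity
    have he : (x * t - 4 * |ν|) ^ 2 / (8 * x) = x / 8 * t ^ 2 + 2 * ν ^ 2 / x - |ν| * t := by
      rw [← sq_abs ν]
      field_simp
      ring
    linarith
  calc Real.exp (-x * Real.cosh t) * Real.cosh (ν * t)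
      ≤ Real.exp (-x * Real.cosh t) * Real.exp (|ν| * t) := by gcongr
    _ = Real.exp (-x * Real.cosh t + |ν| * t) := (Real.exp_add _ _).symm
    _ ≤ Real.exp (2 * ν ^ 2 / x + -(x / 8) * t ^ 2) := by
        apply Real.exp_le_exp.2
        nlinarith [mul_le_mul_of_nonneg_left h2 hx.le]
    _ = _ := Real.exp_add _ _

lemma besselK_pos (ν x : ℝ) (hx : 0 < x) : 0 < besselK ν x := by
  have hpos : ∀ t : ℝ, 0 < Real.exp (-x * Real.cosh t) * Real.cosh (ν * t) :=
    fun t => mul_pos (Real.exp_pos _) (Real.cosh_pos _)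
  unfold besselK
  rw [setIntegral_pos_iff_support_of_nonneg_ae (Filter.Eventually.of_forall fun t => (hpos t).le)
    (besselK_integrable ν x hx)]
  have : Function.support (fun t => Real.exp (-x * Real.cosh t) * Real.cosh (ν * t))
      = Set.univ := by
    ext t
    simpa using (hpos t).ne'
  rw [this]
  simp

lemma besselK_anti (ν x y : ℝ) (hx : 0 < x) (hxy : x ≤ y) : besselK ν y ≤ besselK ν x := by
  unfold besselK
  refine setIntegral_mono (besselK_integrable ν y (hx.trans_le hxy))
    (besselK_integrable ν x hx) fun t => ?_
  have := (Real.cosh_pos t).le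
  have := (Real.cosh_pos (ν * t)).le
  dsimp only
  gcongr

lemma gamma_lower (ν : ℝ) (hν : 0 ≤ ν) (k : ℕ) :
    Real.Gamma (ν + 1) ≤ Real.Gamma (ν + (k : ℝ) + 1) := by
  induction k with
  | zero => simp
  | succ k ih =>
    refine ih.trans ?_
    have hp : 0 < ν + (k : ℝ) + 1 := by positivity
    have := Real.Gamma_add_one hp.ne'
    push_cast
    rw [← add_assoc, this]
    have hk : (0 : ℝ) ≤ k := by positivity
    nlinarith [Real.Gamma_pos_of_pos hp]

/-- Comparison with the exponential series, `Γ(ν + k + 1)` being bounded below in `k`. -/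
lemma besselI_summable (ν y : ℝ) (hν : 0 ≤ ν) (hy : 0 < y) :
    Summable fun k : ℕ => (1 / (Real.Gamma (ν + (k : ℝ) + 1) * (Nat.factorial k : ℝ)))
      * (y / 2) ^ (ν + 2 * (k : ℝ)) := by
  have hs := (Real.summable_pow_div_factorial ((y / 2) ^ 2)).mul_left
    ((y / 2) ^ ν / Real.Gamma (ν + 1))
  have hG : 0 < Real.Gamma (ν + 1) := Real.Gamma_pos_of_pos (by positivity)
  have hy2 : 0 < y / 2 := by positivity
  refine Summable.of_nonneg_of_le (fun k => ?_) (fun k => ?_) hs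
  · have := hG.trans_le (gamma_lower ν hν k)
    positivity
  · have hpow : (y / 2) ^ (ν + 2 * (k : ℝ)) = (y / 2) ^ ν * ((y / 2) ^ 2) ^ k := by
      rw [Real.rpow_add hy2, ← pow_mul, ← Real.rpow_natCast]
      push_cast
      rfl
    rw [hpow]
    calc _ ≤ (1 / (Real.Gamma (ν + 1) * (Nat.factorial k : ℝ)))
          * ((y / 2) ^ ν * ((y / 2) ^ 2) ^ k) := by
          gcongr
          exact gamma_lower ν hν k
      _ = _ := by
          field_simp

/-- `w₂` grows at least linearly at infinity. -/
lemma w₂_lower (r₁ r₂ l : ℝ) (hl : 0 < l) :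
    ∃ c : ℝ, 0 < c ∧ ∀ x : ℝ, 1 ≤ x → c * x ≤ w₂ r₁ r₂ l x := by
  -- Any index `k ≥ (r₁ + r₂) / 2 + 1` gives an exponent of `x` at least `1`.
  obtain ⟨k, hk⟩ := exists_nat_ge ((r₁ + r₂) / 2 + 1)
  set ν := |r₁ - r₂| with hνd
  have hν : 0 ≤ ν := abs_nonneg _
  have hG : ∀ j : ℕ, 0 < Real.Gamma (ν + (j : ℝ) + 1) :=
    fun j => Real.Gamma_pos_of_pos (by positivity)
  have hGk := hG k
  refine ⟨(1 / (Real.Gamma (ν + (k : ℝ) + 1) * (Nat.factorial k : ℝ))) * l ^ (ν + 2 * (k : ℝ)),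
    by positivity, fun x hx => ?_⟩
  have hx0 : 0 < x := by linarith
  have hsx : 0 < Real.sqrt x := Real.sqrt_pos.2 hx0
  have hle := (besselI_summable ν (2 * l * Real.sqrt x) hν (by positivity)).le_tsum k
    (fun j _ => by
      have := hG j
      positivity)
  have hpow : (2 * l * Real.sqrt x / 2) ^ (ν + 2 * (k : ℝ))
      = l ^ (ν + 2 * (k : ℝ)) * x ^ (ν / 2 + k) := by
    rw [show 2 * l * Real.sqrt x / 2 = l * Real.sqrt x by ring,
      Real.mul_rpow hl.le hsx.le, Real.sqrt_eq_rpow, ← Real.rpow_mul hx0.le]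
    congr 2
    ring
  rw [hpow] at hle
  have hxx : x ≤ x ^ (-(r₁ + r₂) / 2) * x ^ (ν / 2 + k) := by
    rw [← Real.rpow_add hx0]
    calc x = x ^ (1 : ℝ) := (Real.rpow_one x).symm
      _ ≤ _ := Real.rpow_le_rpow_of_exponent_le hx (by linarith)
  have hxp : 0 < x ^ (-(r₁ + r₂) / 2) := Real.rpow_pos_of_pos hx0 _
  unfold w₂ besselI
  calc _ ≤ (1 / (Real.Gamma (ν + (k : ℝ) + 1) * (Nat.factorial k : ℝ))) * l ^ (ν + 2 * (k : ℝ))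
        * (x ^ (-(r₁ + r₂) / 2) * x ^ (ν / 2 + k)) := by gcongr
    _ = x ^ (-(r₁ + r₂) / 2) * ((1 / (Real.Gamma (ν + (k : ℝ) + 1) * (Nat.factorial k : ℝ)))
        * (l ^ (ν + 2 * (k : ℝ)) * x ^ (ν / 2 + k))) := by ring
    _ ≤ _ := mul_le_mul_of_nonneg_left hle hxp.le

lemma w₁_bounded_at_top (r₁ r₂ l : ℝ) (hr : 0 < r₁ + r₂) (hl : 0 < l) (x : ℝ) (hx : 1 ≤ x) :
    |w₁ r₁ r₂ l x| ≤ besselK (r₁ - r₂) (2 * l) := by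
  have hx0 : 0 < x := by linarith
  have hs : 1 ≤ Real.sqrt x := Real.one_le_sqrt.2 hx
  have hK := besselK_pos (r₁ - r₂) (2 * l * Real.sqrt x) (by positivity)
  have hKle := besselK_anti (r₁ - r₂) (2 * l) (2 * l * Real.sqrt x) (by positivity)
    (le_mul_of_one_le_right (by positivity) hs)
  have hp : x ^ (-(r₁ + r₂) / 2) ≤ 1 := Real.rpow_le_one_of_one_le_of_nonpos hx (by linarith)
  have hp0 : 0 < x ^ (-(r₁ + r₂) / 2) := Real.rpow_pos_of_pos hx0 _
  unfold w₁
  rw [abs_of_pos (by positivity)]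
  calc _ ≤ 1 * besselK (r₁ - r₂) (2 * l * Real.sqrt x) := by gcongr
    _ ≤ _ := by rwa [one_mul]

lemma w₁_lower (r₁ r₂ l : ℝ) (hl : 0 < l) (x : ℝ) (hx0 : 0 < x) (hx : x ≤ 1) :
    x ^ (-(r₁ + r₂) / 2) * besselK (r₁ - r₂) (2 * l) ≤ w₁ r₁ r₂ l x := by
  have hs0 : 0 < Real.sqrt x := Real.sqrt_pos.2 hx0
  have hs : Real.sqrt x ≤ 1 := Real.sqrt_le_one.2 hx
  unfold w₁
  refine mul_le_mul_of_nonneg_left ?_ (Real.rpow_pos_of_pos hx0 _).le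
  exact besselK_anti _ _ _ (by positivity) (mul_le_of_le_one_right (by positivity) hs)

lemma coeffs_eq_zero (r₁ r₂ l : ℝ) (hr₁ : 0 < r₁) (hr₂ : 0 < r₂) (hl : 0 < l) (A B C : ℝ)
    (hC : ∀ x ∈ Set.Ioi (0 : ℝ), |A * w₁ r₁ r₂ l x + B * w₂ r₁ r₂ l x| ≤ C) :
    A = 0 ∧ B = 0 := by
  have hr : 0 < r₁ + r₂ := by linarith
  set K := besselK (r₁ - r₂) (2 * l) with hKd
  have hK : 0 < K := besselK_pos _ _ (by positivity)
  have hB : B = 0 := by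
    by_contra hB
    have hB' : 0 < |B| := abs_pos.2 hB
    obtain ⟨c, hc, hw⟩ := w₂_lower r₁ r₂ l hl
    have key : ∀ x : ℝ, 1 ≤ x → |B| * c * x ≤ C + |A| * K := by
      intro x hx
      have h1 := hC x (show (0 : ℝ) < x by linarith)
      have h2 := mul_le_mul_of_nonneg_left (w₁_bounded_at_top r₁ r₂ l hr hl x hx) (abs_nonneg A)
      have h3 := mul_le_mul_of_nonneg_left ((hw x hx).trans (le_abs_self _)) hB'.le
      have h4 := abs_sub (A * w₁ r₁ r₂ l x + B * w₂ r₁ r₂ l x) (A * w₁ r₁ r₂ l x)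
      rw [add_sub_cancel_left, abs_mul B, abs_mul A] at h4
      linarith
    have hbc : 0 < |B| * c := by positivity
    have h := key (max 1 ((C + |A| * K + 1) / (|B| * c))) (le_max_left _ _)
    have h' := mul_le_mul_of_nonneg_left
      (le_max_right 1 ((C + |A| * K + 1) / (|B| * c))) hbc.le
    rw [mul_div_cancel₀ _ hbc.ne'] at h'
    linarith
  refine ⟨?_, hB⟩
  by_contra hA
  have hA' : 0 < |A| := abs_pos.2 hA
  have key : ∀ x : ℝ, 0 < x → x ≤ 1 → |A| * K * x ^ (-(r₁ + r₂) / 2) ≤ C := by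
    intro x hx0 hx
    have h1 := hC x hx0
    have h2 := mul_le_mul_of_nonneg_left
      ((w₁_lower r₁ r₂ l hl x hx0 hx).trans (le_abs_self _)) hA'.le
    rw [hB, zero_mul, add_zero, abs_mul] at h1
    linarith
  have hAK : 0 < |A| * K := by positivity
  -- The point `x = M ^ (-2 / (r₁ + r₂))` is where `x ^ (-(r₁ + r₂) / 2) = M`.
  set M := max 1 ((C + 1) / (|A| * K)) with hM
  have hM1 : 1 ≤ M := le_max_left _ _
  have hM0 : 0 < M := by linarith
  have h := key (M ^ (-2 / (r₁ + r₂))) (Real.rpow_pos_of_pos hM0 _)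
    (Real.rpow_le_one_of_one_le_of_nonpos hM1
      (div_nonpos_of_nonpos_of_nonneg (by norm_num) hr.le))
  rw [← Real.rpow_mul hM0.le,
    show -2 / (r₁ + r₂) * (-(r₁ + r₂) / 2) = 1 by field_simp, Real.rpow_one] at h
  have h' := mul_le_mul_of_nonneg_left (le_max_right 1 ((C + 1) / (|A| * K))) hAK.le
  rw [mul_div_cancel₀ _ hAK.ne'] at h'
  linarith

/-- If `A w₁ + B w₂` is bounded on `(0, ∞)`, then `A = B = 0`.  Consequently any two bounded
solutions on `(0, ∞)` of `x² f'' + (1 + r₁ + r₂) x f' + (r₁ r₂ − λ² x) f = g` whose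
difference is a linear combination of `w₁` and `w₂` coincide on `(0, ∞)`. -/
theorem bounded_solution_unique (r₁ r₂ l : ℝ) (hr₁ : 0 < r₁) (hr₂ : 0 < r₂) (hl : 0 < l) :
    (∀ A B : ℝ,
      (∃ C : ℝ, ∀ x ∈ Set.Ioi (0 : ℝ), |A * w₁ r₁ r₂ l x + B * w₂ r₁ r₂ l x| ≤ C) →
      A = 0 ∧ B = 0) ∧
    (∀ g f₁ f₂ : ℝ → ℝ,
      (∃ C : ℝ, ∀ x ∈ Set.Ioi (0 : ℝ), |f₁ x| ≤ C) →
      (∃ C : ℝ, ∀ x ∈ Set.Ioi (0 : ℝ), |f₂ x| ≤ C) →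
      (∀ x ∈ Set.Ioi (0 : ℝ), x ^ 2 * deriv (deriv f₁) x + (1 + r₁ + r₂) * x * deriv f₁ x
        + (r₁ * r₂ - l ^ 2 * x) * f₁ x = g x) →
      (∀ x ∈ Set.Ioi (0 : ℝ), x ^ 2 * deriv (deriv f₂) x + (1 + r₁ + r₂) * x * deriv f₂ x
        + (r₁ * r₂ - l ^ 2 * x) * f₂ x = g x) →
      (∃ A B : ℝ, ∀ x ∈ Set.Ioi (0 : ℝ),
        f₁ x - f₂ x = A * w₁ r₁ r₂ l x + B * w₂ r₁ r₂ l x) →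
      ∀ x ∈ Set.Ioi (0 : ℝ), f₁ x = f₂ x) := by
  refine ⟨fun A B ⟨C, hC⟩ => coeffs_eq_zero r₁ r₂ l hr₁ hr₂ hl A B C hC, ?_⟩
  rintro g f₁ f₂ ⟨C₁, h₁⟩ ⟨C₂, h₂⟩ - - ⟨A, B, hAB⟩ x hx
  obtain ⟨rfl, rfl⟩ := coeffs_eq_zero r₁ r₂ l hr₁ hr₂ hl A B (C₁ + C₂) fun y hy => by
    rw [← hAB y hy]
    exact (abs_sub _ _).trans (add_le_add (h₁ y hy) (h₂ y hy))
  have := hAB x hx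
  linarith
end

section
/- Let r_1, r_2, λ > 0, let k ≥ 1 be an integer, and suppose f : (0,∞) → ℝ is (k+2) times differentiable and h : (0,∞) → ℝ is k times differentiable, with f satisfying the Stein equation x² f''(x) + (1 + r_1 + r_2) x f'(x) + (r_1 r_2 − λ² x) f(x) = h(x) − c for all x > 0, where c is a constant. Then for all x > 0, x² f^{(k+2)}(x) + (r_1 + r_2 + 2k + 1) x f^{(k+1)}(x) + ((r_1 + k)(r_2 + k) − λ² x) f^{(k)}(x) = h^{(k)}(x) + k λ² f^{(k−1)}(x). -/
/-!
The proof is by induction on the order of differentiation. Writing `A = r₁ + r₂ + 2j + 1` and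
`B = (r₁ + j)(r₂ + j)`, differentiating the `j`-th identity raises the coefficient of the middle term
to `A + 2`, raises `B` to `A + B = (r₁ + j + 1)(r₂ + j + 1)`, and produces one extra `-λ² f^{(j)}`,
which joins the `j λ² f^{(j)}` coming from the right-hand side. Since both sides agree on the open
half-line, their derivatives agree there; this is `deriv_second_order_identity`.
-/

open Set

/-- One differentiation of a second-order identity holding on `(0, ∞)`. The functions `a`, `a₁`, `a₂`
are successive derivatives; `b` is the lower-order term on the right-hand side. -/
lemma deriv_second_order_identity (A B L M d : ℝ) (a a₁ a₂ g b : ℝ → ℝ) {x a₃ g₁ b₁ : ℝ} (hx : 0 < x)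
    (ha : HasDerivAt a (a₁ x) x) (ha₁ : HasDerivAt a₁ (a₂ x) x) (ha₂ : HasDerivAt a₂ a₃ x)
    (hg : HasDerivAt g g₁ x) (hb : HasDerivAt b b₁ x)
    (hEq : ∀ y ∈ Ioi (0 : ℝ),
      y ^ 2 * a₂ y + A * y * a₁ y + (B - L * y) * a y = g y + M * b y + d) :
    x ^ 2 * a₃ + (A + 2) * x * a₂ x + (A + B - L * x) * a₁ x = g₁ + M * b₁ + L * a x := by
  have hid := hasDerivAt_id' x
  have hleft := (((hid.pow 2).mul ha₂).add ((hid.const_mul A).mul ha₁)).add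
    (((hid.const_mul L).const_sub B).mul ha)
  have hright := (hg.add (hb.const_mul M)).add_const d
  have hcongr := hright.congr_of_eventuallyEq
    (Filter.eventually_of_mem (Ioi_mem_nhds hx) fun y hy => hEq y hy)
  have huniq := hleft.unique hcongr
  simp at huniq
  linarith

/-- Differentiating the `PG(r₁, r₂, λ)` Stein equation `k` times: if `f` solves
`x² f'' + (1 + r₁ + r₂) x f' + (r₁ r₂ − λ² x) f = h − c` on `(0, ∞)`, then
`x² f^{(k+2)} + (r₁ + r₂ + 2k + 1) x f^{(k+1)} + ((r₁+k)(r₂+k) − λ² x) f^{(k)}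
  = h^{(k)} + k λ² f^{(k−1)}` on `(0, ∞)`. -/
theorem stein_equation_iterated_derivative
    (r₁ r₂ l : ℝ) (hr₁ : 0 < r₁) (hr₂ : 0 < r₂) (hl : 0 < l)
    (k : ℕ) (hk : 1 ≤ k) (f h : ℝ → ℝ) (c : ℝ)
    (hfdiff : ∀ j, j < k + 2 → DifferentiableOn ℝ (iteratedDeriv j f) (Set.Ioi 0))
    (hhdiff : ∀ j, j < k → DifferentiableOn ℝ (iteratedDeriv j h) (Set.Ioi 0))
    (hstein : ∀ x ∈ Set.Ioi (0 : ℝ),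
      x ^ 2 * deriv (deriv f) x + (1 + r₁ + r₂) * x * deriv f x
        + (r₁ * r₂ - l ^ 2 * x) * f x = h x - c) :
    ∀ x ∈ Set.Ioi (0 : ℝ),
      x ^ 2 * iteratedDeriv (k + 2) f x
        + (r₁ + r₂ + 2 * (k : ℝ) + 1) * x * iteratedDeriv (k + 1) f x
        + ((r₁ + k) * (r₂ + k) - l ^ 2 * x) * iteratedDeriv k f x
      = iteratedDeriv k h x + (k : ℝ) * l ^ 2 * iteratedDeriv (k - 1) f x := by
  have hf : ∀ j < k + 2, ∀ x ∈ Ioi (0 : ℝ),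
      HasDerivAt (iteratedDeriv j f) (iteratedDeriv (j + 1) f x) x := fun j hj x hx => by
    rw [iteratedDeriv_succ]
    exact ((hfdiff j hj).differentiableAt (Ioi_mem_nhds hx)).hasDerivAt
  have hh : ∀ j < k, ∀ x ∈ Ioi (0 : ℝ),
      HasDerivAt (iteratedDeriv j h) (iteratedDeriv (j + 1) h x) x := fun j hj x hx => by
    rw [iteratedDeriv_succ]
    exact ((hhdiff j hj).differentiableAt (Ioi_mem_nhds hx)).hasDerivAt
  -- The induction runs over `j + 1` so that no truncated subtraction appears.
  have key : ∀ j, j + 1 ≤ k → ∀ x ∈ Ioi (0 : ℝ),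
      x ^ 2 * iteratedDeriv (j + 3) f x
        + (r₁ + r₂ + 2 * (j + 1 : ℝ) + 1) * x * iteratedDeriv (j + 2) f x
        + ((r₁ + (j + 1)) * (r₂ + (j + 1)) - l ^ 2 * x) * iteratedDeriv (j + 1) f x
      = iteratedDeriv (j + 1) h x + (j + 1 : ℝ) * l ^ 2 * iteratedDeriv j f x := by
    intro j
    induction j with
    | zero =>
      intro hj x hx
      have hstep := deriv_second_order_identity (1 + r₁ + r₂) (r₁ * r₂) (l ^ 2) 0 (-c)
        (iteratedDeriv 0 f) (iteratedDeriv 1 f) (iteratedDeriv 2 f) (iteratedDeriv 0 h)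
        (fun _ => 0) hx (hf 0 (by omega) x hx) (hf 1 (by omega) x hx) (hf 2 (by omega) x hx)
        (hh 0 (by omega) x hx) (hasDerivAt_const x 0) (fun y hy => by
          have hy' := hstein y hy
          rw [iteratedDeriv_succ, iteratedDeriv_one, iteratedDeriv_zero, iteratedDeriv_zero]
          linarith)
      norm_num at hstep ⊢
      linarith
    | succ j ih =>
      intro hj x hx
      have hstep := deriv_second_order_identity (r₁ + r₂ + 2 * (j + 1 : ℝ) + 1)
        ((r₁ + (j + 1)) * (r₂ + (j + 1))) (l ^ 2) ((j + 1 : ℝ) * l ^ 2) 0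
        (iteratedDeriv (j + 1) f) (iteratedDeriv (j + 2) f) (iteratedDeriv (j + 3) f)
        (iteratedDeriv (j + 1) h) (iteratedDeriv j f) hx
        (hf (j + 1) (by omega) x hx) (hf (j + 2) (by omega) x hx) (hf (j + 3) (by omega) x hx)
        (hh (j + 1) (by omega) x hx) (hf j (by omega) x hx) (fun y hy => by
          rw [add_zero]
          exact ih (by omega) y hy)
      push_cast
      rw [show j + 1 + 3 = j + 3 + 1 from rfl, show j + 1 + 2 = j + 3 from rfl,
        show j + 1 + 1 = j + 2 from rfl] at *
      linarith
  obtain ⟨j, rfl⟩ : ∃ j, k = j + 1 := ⟨k - 1, by omega⟩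
  intro x hx
  have hfinal := key j le_rfl x hx
  rw [Nat.add_sub_cancel]
  push_cast
  exact hfinal
end

section
/- Let r_1, r_2, λ > 0, let Y = Y_1 Y_2 with Y_1 ~ Γ(r_1+1, λ) and Y_2 ~ Γ(r_2+1, λ) independent, and let h : (0,∞) → ℝ be continuously differentiable and bounded with bounded derivative. Suppose f : (0,∞) → ℝ is a bounded, three times continuously differentiable solution of the PG(r_1, r_2, λ) Stein equation x² f''(x) + (1 + r_1 + r_2) x f'(x) + (r_1 r_2 − λ² x) f(x) = h(x) − c (c a constant), such that E|Y f'(Y)|, E|Y² f''(Y)|, E|Y³ f'''(Y)| < ∞. Then E[h'(Y) + λ² f(Y)] = 0. -/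
open MeasureTheory ProbabilityTheory Set

/-!
Differentiating the Stein equation of `f` shows that `h' + l² f` is the Stein operator with shapes
`s₁ = r₁ + 1`, `s₂ = r₂ + 1` applied to `f'`. This operator factors: with `T_s u = x u' + s u`, it is
`T_{s₁} T_{s₂} - l² x`. For `X ∼ Γ(s, l)` integration by parts gives `E[T_s u(X)] = l E[X u(X)]`
(`integral_gamma_stein`). As `x ∂ₓ` commutes with dilations, using this identity first in `Y₁`
for fixed `Y₂`, and then in `Y₂` for fixed `Y₁`, yields
`E[T_{s₁} T_{s₂} f'(Y)] = l E[Y₁ T_{s₂} f'(Y)] = l² E[Y f'(Y)]` (`integral_prod_gamma_stein`).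

The boundary terms and Fubini are controlled by pointwise bounds: `f'`, `x f''` and `x² f'''` are
all `O(1 / x + x)` (`exists_growth_bound`). They follow from boundedness of `f`, `h`, `h'` and the
equation itself, and `1 / X` is integrable because both shapes exceed `1`.
-/

/-! ### Integration against the gamma distribution -/

lemma gammaMeasure_ae_pos (s l : ℝ) : ∀ᵐ x ∂gammaMeasure s l, x ∈ Ioi (0 : ℝ) := by
  have hm : Measurable (gammaPDF s l) := (measurable_gammaPDFReal s l).ennreal_ofReal
  rw [gammaMeasure, ae_withDensity_iff hm]
  filter_upwards [(measure_eq_zero_iff_ae_notMem (μ := volume)).1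
    (Real.volume_singleton (a := (0 : ℝ)))] with x hx hx'
  by_contra hneg
  rcases lt_or_eq_of_le (notMem_Ioi.1 hneg) with h | h
  · exact hx' (gammaPDF_of_neg h)
  · exact hx h

lemma gammaMeasure_eq_restrict (s l : ℝ) :
    gammaMeasure s l = (volume.restrict (Ioi 0)).withDensity (gammaPDF s l) := by
  rw [← restrict_withDensity measurableSet_Ioi]
  exact (Measure.restrict_eq_self_of_ae_mem (gammaMeasure_ae_pos s l)).symm

lemma toReal_gammaPDF {s l x : ℝ} (hs : 0 < s) (hl : 0 < l) (hx : 0 < x) :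
    (gammaPDF s l x).toReal
      = l ^ s / Real.Gamma s * x ^ (s - 1) * Real.exp (-(l * x)) := by
  rw [gammaPDF, ENNReal.toReal_ofReal (gammaPDFReal_nonneg hs hl x), gammaPDFReal, if_pos hx.le]

lemma integrable_gammaMeasure_iff {s l : ℝ} (hs : 0 < s) (hl : 0 < l) (F : ℝ → ℝ) :
    Integrable F (gammaMeasure s l) ↔
      IntegrableOn (fun x => l ^ s / Real.Gamma s * x ^ (s - 1) * Real.exp (-(l * x)) * F x)
        (Ioi 0) := by
  have hm : Measurable (gammaPDF s l) := (measurable_gammaPDFReal s l).ennreal_ofReal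
  rw [gammaMeasure_eq_restrict, integrable_withDensity_iff_integrable_smul' hm
    (ae_of_all _ fun x => ENNReal.ofReal_lt_top)]
  refine integrable_congr ?_
  filter_upwards [ae_restrict_mem measurableSet_Ioi] with x hx
  rw [toReal_gammaPDF hs hl hx, smul_eq_mul]

lemma integral_gammaMeasure {s l : ℝ} (hs : 0 < s) (hl : 0 < l) (F : ℝ → ℝ) :
    ∫ x, F x ∂gammaMeasure s l =
      ∫ x in Ioi 0, l ^ s / Real.Gamma s * x ^ (s - 1) * Real.exp (-(l * x)) * F x := by
  have hm : Measurable (gammaPDF s l) := (measurable_gammaPDFReal s l).ennreal_ofReal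
  rw [gammaMeasure_eq_restrict, integral_withDensity_eq_integral_toReal_smul₀ hm.aemeasurable
    (ae_of_all _ fun x => ENNReal.ofReal_lt_top)]
  refine integral_congr_ae ?_
  filter_upwards [ae_restrict_mem measurableSet_Ioi] with x hx
  rw [toReal_gammaPDF hs hl hx, smul_eq_mul]

lemma integrable_rpow_gammaMeasure {s l p : ℝ} (hs : 0 < s) (hl : 0 < l) (hp : 0 < s + p) :
    Integrable (fun x => x ^ p) (gammaMeasure s l) := by
  rw [integrable_gammaMeasure_iff hs hl]
  have := (integrableOn_rpow_mul_exp_neg_mul_rpow (p := 1) (s := s + p - 1) (b := l)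
    (by linarith) one_pos hl).const_mul (l ^ s / Real.Gamma s)
  refine IntegrableOn.congr_fun this (fun x hx => ?_) measurableSet_Ioi
  have e : s + p - 1 = (s - 1) + p := by ring
  simp only [e, Real.rpow_add hx, Real.rpow_one, neg_mul]
  ring

/-- The dominating functions of the argument. Integrability at `0` is where shape `> 1` enters. -/
lemma integrable_dominating_gammaMeasure {s l : ℝ} (hs : 1 < s) (hl : 0 < l) (A B : ℝ) :
    Integrable (fun x => (x⁻¹ + x) * (A + B * x)) (gammaMeasure s l) := by
  have hs0 : 0 < s := by linarith
  have h1 := (integrable_rpow_gammaMeasure (p := -1) hs0 hl (by linarith)).const_mul A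
  have h2 := (integrable_rpow_gammaMeasure (p := 0) hs0 hl (by linarith)).const_mul B
  have h3 := (integrable_rpow_gammaMeasure (p := 1) hs0 hl (by linarith)).const_mul A
  have h4 := (integrable_rpow_gammaMeasure (p := 2) hs0 hl (by linarith)).const_mul B
  refine (((h1.add h2).add h3).add h4).congr ?_
  filter_upwards [gammaMeasure_ae_pos s l] with x hx
  have hx0 : x ≠ 0 := ne_of_gt hx
  simp only [Pi.add_apply, Real.rpow_neg_one, Real.rpow_zero, Real.rpow_one, Real.rpow_two]
  field_simp
  ring

/-- Stein identity of the gamma distribution: the integrand times the density is the derivative of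
`x p(x) u(x)`, which vanishes at `0` and at `∞`. -/
lemma integral_gamma_stein {s l K : ℝ} (hs : 1 < s) (hl : 0 < l) {u u' : ℝ → ℝ}
    (hu : ∀ x ∈ Ioi (0 : ℝ), HasDerivAt u (u' x) x) (hu'c : ContinuousOn u' (Ioi 0))
    (hb : ∀ x ∈ Ioi (0 : ℝ), |u x| ≤ K * (x⁻¹ + x))
    (hb' : ∀ x ∈ Ioi (0 : ℝ), |x * u' x| ≤ K * (x⁻¹ + x)) :
    ∫ x, (x * u' x + s * u x - l * x * u x) ∂gammaMeasure s l = 0 := by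
  have hs0 : 0 < s := by linarith
  have huc : ContinuousOn u (Ioi 0) := fun x hx => (hu x hx).continuousAt.continuousWithinAt
  have hint : Integrable (fun x => x * u' x + s * u x - l * x * u x) (gammaMeasure s l) := by
    refine ((integrable_dominating_gammaMeasure hs hl (1 + s) l).const_mul K).mono' ?_ ?_
    · rw [← Measure.restrict_eq_self_of_ae_mem (gammaMeasure_ae_pos s l)]
      exact ContinuousOn.aestronglyMeasurable (by fun_prop) measurableSet_Ioi
    · filter_upwards [gammaMeasure_ae_pos s l] with x hx
      have hx' : 0 < x := hx
      have h1 := hb x hx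
      have h2 := hb' x hx
      rw [Real.norm_eq_abs]
      calc |x * u' x + s * u x - l * x * u x|
          ≤ |x * u' x| + |s * u x| + |l * x * u x| :=
            (abs_sub _ _).trans (add_le_add_left (abs_add_le _ _) _)
        _ = |x * u' x| + s * |u x| + l * x * |u x| := by
            rw [abs_mul s, abs_mul (l * x), abs_of_pos hs0, abs_of_pos (mul_pos hl hx')]
        _ ≤ K * (x⁻¹ + x) + s * (K * (x⁻¹ + x)) + l * x * (K * (x⁻¹ + x)) := by gcongr
        _ = K * ((x⁻¹ + x) * (1 + s + l * x)) := by ring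
  rw [integral_gammaMeasure hs0 hl]
  rw [integrable_gammaMeasure_iff hs0 hl] at hint
  set k := l ^ s / Real.Gamma s with hk
  let P : ℝ → ℝ := fun x => k * (x ^ s * Real.exp (-l * x))
  let P' : ℝ → ℝ := fun x => k * (x ^ (s - 1) * Real.exp (-l * x) * (s - l * x))
  have hP : ∀ x ∈ Ioi (0 : ℝ), HasDerivAt P (P' x) x := by
    intro x hx
    have h1 := Real.hasDerivAt_rpow_const (x := x) (p := s) (Or.inl (ne_of_gt hx))
    have h2 : HasDerivAt (fun x : ℝ => Real.exp (-l * x)) (Real.exp (-l * x) * -l) x := by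
      simpa using ((hasDerivAt_id x).const_mul (-l)).exp
    convert! (h1.mul h2).const_mul k using 1
    have e : x ^ s = x ^ (s - 1) * x := by
      rw [← Real.rpow_add_one (ne_of_gt hx)]; ring_nf
    simp only [P', e]
    ring
  have hPu : ∀ x ∈ Ioi (0 : ℝ), |(P * u) x| ≤
      |k| * K * (x ^ (s - 1) * Real.exp (-l * x) + x ^ (s + 1) * Real.exp (-l * x)) := by
    intro x hx
    have hx' : 0 < x := hx
    have e : x ^ s = x ^ (s - 1) * x := by
      rw [← Real.rpow_add_one (ne_of_gt hx)]; ring_nf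
    have e2 : x ^ (s + 1) = x ^ (s - 1) * x * x := by
      rw [← e, ← Real.rpow_add_one (ne_of_gt hx)]
    have hpos : 0 < x ^ (s - 1) * x * Real.exp (-l * x) := by positivity
    simp only [Pi.mul_apply, P, abs_mul, e]
    rw [← abs_mul, ← abs_mul, abs_of_pos hpos]
    calc _ ≤ |k| * (x ^ (s - 1) * x * Real.exp (-l * x)) * (K * (x⁻¹ + x)) := by
          gcongr; exact hb x hx
      _ = _ := by rw [e2]; field_simp
  have key := integral_Ioi_deriv_mul_eq_sub (a := (0 : ℝ)) (a' := (0 : ℝ)) (b' := (0 : ℝ))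
    hP hu ?_ ?_ ?_
  · rw [sub_zero] at key
    refine Eq.trans ?_ key
    refine setIntegral_congr_fun measurableSet_Ioi fun x hx => ?_
    have e : x ^ s = x ^ (s - 1) * x := by
      rw [← Real.rpow_add_one (ne_of_gt hx)]; ring_nf
    simp only [P, P', e, neg_mul]
    ring
  · refine IntegrableOn.congr_fun hint (fun x hx => ?_) measurableSet_Ioi
    have e : x ^ s = x ^ (s - 1) * x := by
      rw [← Real.rpow_add_one (ne_of_gt hx)]; ring_nf
    simp only [P, P', e, neg_mul, Pi.add_apply, Pi.mul_apply]
    ring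
  · refine squeeze_zero_norm' (eventually_nhdsWithin_of_forall (a := (0 : ℝ)) (s := Ioi 0) hPu) ?_
    have hc : Continuous (fun x : ℝ => |k| * K * (x ^ (s - 1) * Real.exp (-l * x)
        + x ^ (s + 1) * Real.exp (-l * x))) := by
      have c1 := Real.continuous_rpow_const (q := s - 1) (by linarith)
      have c2 := Real.continuous_rpow_const (q := s + 1) (by linarith)
      fun_prop
    have := (hc.tendsto 0).mono_left (nhdsWithin_le_nhds (s := Ioi 0))
    rwa [Real.zero_rpow (by linarith), Real.zero_rpow (by linarith), zero_mul, add_zero,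
      mul_zero] at this
  · refine squeeze_zero_norm' ((Filter.eventually_gt_atTop (0 : ℝ)).mono fun x hx => hPu x hx) ?_
    have := ((tendsto_rpow_mul_exp_neg_mul_atTop_nhds_zero (s - 1) l hl).add
      (tendsto_rpow_mul_exp_neg_mul_atTop_nhds_zero (s + 1) l hl)).const_mul (|k| * K)
    simpa using this

lemma gammaMeasure_prod_ae_pos (s t : ℝ) {l : ℝ} [SFinite (gammaMeasure t l)] :
    ∀ᵐ z ∂((gammaMeasure s l).prod (gammaMeasure t l)), z ∈ Ioi (0 : ℝ) ×ˢ Ioi (0 : ℝ) := by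
  have h1 := Measure.quasiMeasurePreserving_fst (μ := gammaMeasure s l)
    (ν := gammaMeasure t l) |>.ae (gammaMeasure_ae_pos s l)
  have h2 := Measure.quasiMeasurePreserving_snd (μ := gammaMeasure s l)
    (ν := gammaMeasure t l) |>.ae (gammaMeasure_ae_pos t l)
  filter_upwards [h1, h2] with z hz1 hz2 using ⟨hz1, hz2⟩

/-- The gamma Stein identity in the first variable of `V (x * y)`, integrated over the second
variable with an additional weight `1` (`j = 0`) or `y` (`j = 1`). -/
lemma integral_prod_gamma_stein {s t l K : ℝ} (hs : 1 < s) (ht : 1 < t) (hl : 0 < l)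
    {V V' : ℝ → ℝ}
    (hV : ∀ x ∈ Ioi (0 : ℝ), HasDerivAt V (V' x) x) (hV'c : ContinuousOn V' (Ioi 0))
    (hb : ∀ x ∈ Ioi (0 : ℝ), |V x| ≤ K * (x⁻¹ + x))
    (hb' : ∀ x ∈ Ioi (0 : ℝ), |x * V' x| ≤ K * (x⁻¹ + x)) (j : ℕ) (hj : j ≤ 1) :
    Integrable (fun z : ℝ × ℝ => z.2 ^ j * (z.1 * z.2 * V' (z.1 * z.2) + s * V (z.1 * z.2)
        - l * z.1 * V (z.1 * z.2))) ((gammaMeasure s l).prod (gammaMeasure t l)) ∧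
    ∫ z : ℝ × ℝ, z.2 ^ j * (z.1 * z.2 * V' (z.1 * z.2) + s * V (z.1 * z.2)
        - l * z.1 * V (z.1 * z.2)) ∂((gammaMeasure s l).prod (gammaMeasure t l)) = 0 := by
  have hs0 : 0 < s := by linarith
  have := isProbabilityMeasure_gammaMeasure hs0 hl
  have := isProbabilityMeasure_gammaMeasure (a := t) (by linarith) hl
  have hK : 0 ≤ K := by
    have := (abs_nonneg _).trans (hb 1 (mem_Ioi.2 one_pos))
    norm_num at this
    exact this
  have hVc : ContinuousOn V (Ioi 0) := fun x hx => (hV x hx).continuousAt.continuousWithinAt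
  have hae := gammaMeasure_prod_ae_pos s t (l := l)
  have hsplit : ∀ x y : ℝ, 0 < x → 0 < y →
      (x * y)⁻¹ + x * y ≤ (x⁻¹ + x) * (y⁻¹ + y) := by
    intro x y hx hy
    have h1 : 0 < x⁻¹ * y := by positivity
    have h2 : 0 < x * y⁻¹ := by positivity
    rw [mul_inv]
    nlinarith
  have hint : Integrable (fun z : ℝ × ℝ => z.2 ^ j * (z.1 * z.2 * V' (z.1 * z.2)
      + s * V (z.1 * z.2) - l * z.1 * V (z.1 * z.2)))
      ((gammaMeasure s l).prod (gammaMeasure t l)) := by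
    refine (((integrable_dominating_gammaMeasure hs hl (1 + s) l).mul_prod
      (integrable_dominating_gammaMeasure ht hl 1 1)).const_mul K).mono' ?_ ?_
    · rw [← Measure.restrict_eq_self_of_ae_mem hae]
      refine ContinuousOn.aestronglyMeasurable ?_ (measurableSet_Ioi.prod measurableSet_Ioi)
      have hm : MapsTo (fun z : ℝ × ℝ => z.1 * z.2) (Ioi (0 : ℝ) ×ˢ Ioi (0 : ℝ)) (Ioi 0) :=
        fun z hz => mem_Ioi.2 (mul_pos hz.1 hz.2)
      have c1 : ContinuousOn (fun z : ℝ × ℝ => V (z.1 * z.2)) (Ioi (0 : ℝ) ×ˢ Ioi (0 : ℝ)) :=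
        hVc.comp (by fun_prop) hm
      have c2 : ContinuousOn (fun z : ℝ × ℝ => V' (z.1 * z.2)) (Ioi (0 : ℝ) ×ˢ Ioi (0 : ℝ)) :=
        hV'c.comp (by fun_prop) hm
      fun_prop
    · filter_upwards [hae] with z hz
      obtain ⟨x, y⟩ := z
      have hx : 0 < x := hz.1
      have hy : 0 < y := hz.2
      have hxy : 0 < x * y := mul_pos hx hy
      have h1 := hb _ hxy
      have h2 := hb' _ hxy
      have hyj : y ^ j ≤ 1 + y := by
        interval_cases j <;> simp [hy.le]
      simp only [Real.norm_eq_abs]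
      rw [abs_mul, abs_of_pos (pow_pos hy j)]
      calc y ^ j * |x * y * V' (x * y) + s * V (x * y) - l * x * V (x * y)|
          ≤ y ^ j * (|x * y * V' (x * y)| + |s * V (x * y)| + |l * x * V (x * y)|) := by
            gcongr
            exact (abs_sub _ _).trans (add_le_add_left (abs_add_le _ _) _)
        _ = y ^ j * (|x * y * V' (x * y)| + s * |V (x * y)| + l * x * |V (x * y)|) := by
            rw [abs_mul s, abs_mul (l * x), abs_of_pos hs0, abs_of_pos (mul_pos hl hx)]
        _ ≤ y ^ j * (K * ((x * y)⁻¹ + x * y) + s * (K * ((x * y)⁻¹ + x * y))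
              + l * x * (K * ((x * y)⁻¹ + x * y))) := by gcongr
        _ = y ^ j * (K * ((x * y)⁻¹ + x * y) * (1 + s + l * x)) := by ring
        _ ≤ (1 + y) * (K * ((x⁻¹ + x) * (y⁻¹ + y)) * (1 + s + l * x)) := by
            gcongr
            exact hsplit x y hx hy
        _ = _ := by ring
  refine ⟨hint, ?_⟩
  rw [integral_prod_symm _ hint]
  refine integral_eq_zero_of_ae ?_
  filter_upwards [gammaMeasure_ae_pos t l] with y hy
  have hy' : 0 < y := hy
  simp only [Pi.zero_apply]
  rw [integral_const_mul]
  refine mul_eq_zero_of_right _ ?_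
  have bound : ∀ x : ℝ, 0 < x →
      K * ((x * y)⁻¹ + x * y) ≤ (K * (y⁻¹ + y)) * (x⁻¹ + x) := by
    intro x hx
    calc K * ((x * y)⁻¹ + x * y) ≤ K * ((x⁻¹ + x) * (y⁻¹ + y)) := by
          gcongr
          exact hsplit x y hx hy'
      _ = _ := by ring
  have key := integral_gamma_stein (K := K * (y⁻¹ + y)) hs hl (u := fun x => V (x * y))
    (u' := fun x => V' (x * y) * y) ?_ ?_ ?_ ?_
  · rw [← key]
    congr 1
    ext x
    ring
  · intro x hx
    have h := hV (x * y) (mul_pos hx hy')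
    exact h.comp x (by simpa using (hasDerivAt_id x).mul_const y)
  · refine ContinuousOn.mul (hV'c.comp (by fun_prop) fun x hx => mul_pos hx hy')
      continuousOn_const
  · intro x hx
    exact (hb _ (mul_pos hx hy')).trans (bound x hx)
  · intro x hx
    have := (hb' _ (mul_pos hx hy')).trans (bound x hx)
    rwa [show x * (V' (x * y) * y) = x * y * V' (x * y) by ring]

/-! ### Growth of bounded solutions of the Stein equation -/

/-- A bounded `f` with `x² f'' + a x f' = O(1 + x)` has `x f' = O(1 + x)`. On `[x, 2x]` the mean
value theorem gives a point where `|f'|` is at most `2C / x`, and the bound is carried from there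
to `x` by means of `(x ^ a f')' = x ^ (a - 2) (x² f'' + a x f')`. -/
lemma bound_deriv_of_euler {a C K : ℝ} (ha : 0 < a) (hK : 0 ≤ K) {f f₁ f₂ : ℝ → ℝ}
    (h1 : ∀ x ∈ Ioi (0 : ℝ), HasDerivAt f (f₁ x) x)
    (h2 : ∀ x ∈ Ioi (0 : ℝ), HasDerivAt f₁ (f₂ x) x)
    (hC : ∀ x ∈ Ioi (0 : ℝ), |f x| ≤ C)
    (hq : ∀ x ∈ Ioi (0 : ℝ), |x ^ 2 * f₂ x + a * x * f₁ x| ≤ K * (1 + x))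
    {x : ℝ} (hx : 0 < x) :
    |x * f₁ x| ≤ 2 ^ a * (2 * C + K * (1 + 2 * x)) := by
  have hsub : ∀ y ∈ Icc x (2 * x), y ∈ Ioi (0 : ℝ) := fun y hy => mem_Ioi.2 (hx.trans_le hy.1)
  obtain ⟨ξ, hξ, hξe⟩ := exists_hasDerivAt_eq_slope f f₁ (show x < 2 * x by linarith)
    (fun y hy => (h1 y (hsub y hy)).continuousAt.continuousWithinAt)
    (fun y hy => h1 y (hsub y (Ioo_subset_Icc_self hy)))
  have hξ' := Ioo_subset_Icc_self hξ
  have hξ0 : 0 < ξ := hsub ξ hξ'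
  have hf1 : |f₁ ξ| ≤ 2 * C / x := by
    rw [hξe, abs_div, show 2 * x - x = x by ring, abs_of_pos hx]
    gcongr
    have := abs_sub (f (2 * x)) (f x)
    linarith [hC x hx, hC (2 * x) (mem_Ioi.2 (by linarith))]
  let G : ℝ → ℝ := fun y => y ^ a * f₁ y
  have hG : ∀ y ∈ Icc x (2 * x), HasDerivWithinAt G
      (y ^ a / y ^ 2 * (y ^ 2 * f₂ y + a * y * f₁ y)) (Icc x (2 * x)) y := by
    intro y hy
    have hy0 : 0 < y := hsub y hy
    have := (Real.hasDerivAt_rpow_const (x := y) (p := a) (Or.inl hy0.ne')).mul (h2 y hy0)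
    refine HasDerivAt.hasDerivWithinAt ?_
    convert! this using 1
    rw [Real.rpow_sub_one hy0.ne']
    field_simp
    ring
  have hGb : ∀ y ∈ Icc x (2 * x), ‖y ^ a / y ^ 2 * (y ^ 2 * f₂ y + a * y * f₁ y)‖
      ≤ (2 * x) ^ a / x ^ 2 * (K * (1 + 2 * x)) := by
    intro y hy
    have hy0 : 0 < y := hsub y hy
    rw [Real.norm_eq_abs, abs_mul, abs_of_pos (by positivity : 0 < y ^ a / y ^ 2)]
    have h3 : |y ^ 2 * f₂ y + a * y * f₁ y| ≤ K * (1 + 2 * x) :=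
      (hq y hy0).trans (by gcongr; exact hy.2)
    have h4 : y ^ a / y ^ 2 ≤ (2 * x) ^ a / x ^ 2 := by
      gcongr
      · exact hy.2
      · exact hy.1
    exact mul_le_mul h4 h3 (abs_nonneg _) (by positivity)
  have hmv := Convex.norm_image_sub_le_of_norm_hasDerivWithin_le hG hGb (convex_Icc _ _) hξ'
    (left_mem_Icc.2 (by linarith))
  have hdist : ‖x - ξ‖ ≤ x := by
    rw [Real.norm_eq_abs, abs_le]
    constructor <;> linarith [hξ.1, hξ.2]
  have hGξ : |G ξ| ≤ (2 * x) ^ a * (2 * C / x) := by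
    simp only [G]
    rw [abs_mul, abs_of_pos (by positivity : 0 < ξ ^ a)]
    refine mul_le_mul ?_ hf1 (abs_nonneg _) (by positivity)
    exact Real.rpow_le_rpow hξ0.le hξ'.2 ha.le
  have hGx : |G x| ≤ (2 * x) ^ a * (2 * C / x)
      + (2 * x) ^ a / x ^ 2 * (K * (1 + 2 * x)) * x := by
    have e : G x = G ξ + (G x - G ξ) := by ring
    rw [e]
    refine (abs_add_le _ _).trans (add_le_add hGξ (hmv.trans ?_))
    gcongr
  have hxa : 0 < x ^ a := by positivity
  rw [Real.mul_rpow (by norm_num) hx.le] at hGx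
  have hGx' : x ^ a * |f₁ x| ≤ x ^ a * (2 ^ a * (2 * C + K * (1 + 2 * x)) / x) := by
    have e : |G x| = x ^ a * |f₁ x| := by simp only [G]; rw [abs_mul, abs_of_pos hxa]
    rw [← e]
    refine hGx.trans (le_of_eq ?_)
    field_simp
  have := le_of_mul_le_mul_left hGx' hxa
  rw [abs_mul, abs_of_pos hx]
  rw [le_div_iff₀ hx] at this
  linarith

/-- The three growth bounds needed for the domination arguments: each of `f'`, `x f''`, `x² f'''`
is `O(1 / x + x)`. The first comes from the previous lemma, the second from the Stein equation,
the third from the differentiated Stein equation. -/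
lemma exists_growth_bound {r₁ r₂ l c C₀ C₁ C : ℝ} (hr₁ : 0 < r₁) (hr₂ : 0 < r₂)
    {h h₁ f f₁ f₂ f₃ : ℝ → ℝ}
    (h1 : ∀ x ∈ Ioi (0 : ℝ), HasDerivAt f (f₁ x) x)
    (h2 : ∀ x ∈ Ioi (0 : ℝ), HasDerivAt f₁ (f₂ x) x)
    (hC₀ : ∀ x ∈ Ioi (0 : ℝ), |h x| ≤ C₀) (hC₁ : ∀ x ∈ Ioi (0 : ℝ), |h₁ x| ≤ C₁)
    (hC : ∀ x ∈ Ioi (0 : ℝ), |f x| ≤ C)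
    (hstein : ∀ x ∈ Ioi (0 : ℝ), x ^ 2 * f₂ x + (1 + r₁ + r₂) * x * f₁ x
        + (r₁ * r₂ - l ^ 2 * x) * f x = h x - c)
    (hstein' : ∀ x ∈ Ioi (0 : ℝ), x ^ 2 * f₃ x + (3 + r₁ + r₂) * x * f₂ x
        + ((r₁ + 1) * (r₂ + 1) - l ^ 2 * x) * f₁ x = h₁ x + l ^ 2 * f x) :
    ∃ K, 0 ≤ K ∧ ∀ x ∈ Ioi (0 : ℝ), |f₁ x| ≤ K * (x⁻¹ + x) ∧ |x * f₂ x| ≤ K * (x⁻¹ + x) ∧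
      |x ^ 2 * f₃ x| ≤ K * (x⁻¹ + x) := by
  have hC0 : 0 ≤ C := (abs_nonneg _).trans (hC 1 (mem_Ioi.2 one_pos))
  have hC00 : 0 ≤ C₀ := (abs_nonneg _).trans (hC₀ 1 (mem_Ioi.2 one_pos))
  have hC10 : 0 ≤ C₁ := (abs_nonneg _).trans (hC₁ 1 (mem_Ioi.2 one_pos))
  set a := 1 + r₁ + r₂ with ha
  have ha0 : 0 < a := by positivity
  obtain ⟨K₀, hK₀, hq⟩ : ∃ K₀, 0 ≤ K₀ ∧ ∀ x ∈ Ioi (0 : ℝ),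
      |x ^ 2 * f₂ x + a * x * f₁ x| ≤ K₀ * (1 + x) := by
    refine ⟨C₀ + |c| + (r₁ * r₂ + l ^ 2) * C, by positivity, fun x hx => ?_⟩
    have hx0 : 0 < x := hx
    have e : x ^ 2 * f₂ x + a * x * f₁ x = h x - c - (r₁ * r₂ - l ^ 2 * x) * f x := by
      linarith [hstein x hx]
    have b1 : |r₁ * r₂ - l ^ 2 * x| ≤ r₁ * r₂ + l ^ 2 * x := by
      refine (abs_sub _ _).trans (le_of_eq ?_)
      rw [abs_of_pos (by positivity), abs_of_nonneg (by positivity)]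
    rw [e]
    calc |h x - c - (r₁ * r₂ - l ^ 2 * x) * f x|
        ≤ |h x| + |c| + |r₁ * r₂ - l ^ 2 * x| * |f x| := by
          rw [← abs_mul]
          exact (abs_sub _ _).trans (add_le_add_left (abs_sub _ _) _)
      _ ≤ C₀ + |c| + (r₁ * r₂ + l ^ 2 * x) * C := by
          gcongr
          · exact hC₀ x hx
          · exact hC x hx
      _ ≤ _ := by
          have : 0 ≤ (C₀ + |c| + r₁ * r₂ * C) * x := by positivity
          have : 0 ≤ l ^ 2 * C := by positivity
          nlinarith
  obtain ⟨K₁, hK₁, hb1⟩ : ∃ K₁, 0 ≤ K₁ ∧ ∀ x ∈ Ioi (0 : ℝ), |x * f₁ x| ≤ K₁ * (1 + x) := by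
    refine ⟨2 ^ a * (2 * C + 2 * K₀), by positivity, fun x hx => ?_⟩
    have hx0 : 0 < x := hx
    refine (bound_deriv_of_euler ha0 hK₀ h1 h2 hC hq hx0).trans ?_
    rw [mul_assoc]
    gcongr
    nlinarith [mul_nonneg hC0 hx0.le]
  obtain ⟨K₂, hK₂, hb2⟩ : ∃ K₂, 0 ≤ K₂ ∧ ∀ x ∈ Ioi (0 : ℝ), |x ^ 2 * f₂ x| ≤ K₂ * (1 + x) := by
    refine ⟨K₀ + a * K₁, by positivity, fun x hx => ?_⟩
    have e : x ^ 2 * f₂ x = (x ^ 2 * f₂ x + a * x * f₁ x) - a * (x * f₁ x) := by ring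
    rw [e]
    refine (abs_sub _ _).trans ?_
    rw [abs_mul a, abs_of_pos ha0]
    have := mul_le_mul_of_nonneg_left (hb1 x hx) ha0.le
    linarith [hq x hx]
  obtain ⟨K₃, hK₃, hb3⟩ : ∃ K₃, 0 ≤ K₃ ∧ ∀ x ∈ Ioi (0 : ℝ),
      |x ^ 3 * f₃ x| ≤ K₃ * (1 + x ^ 2) := by
    refine ⟨C₁ + l ^ 2 * C + 2 * ((3 + r₁ + r₂) * K₂) + 2 * ((r₁ + 1) * (r₂ + 1) + l ^ 2) * K₁,
      by positivity, fun x hx => ?_⟩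
    have hx0 : 0 < x := hx
    have e : x ^ 3 * f₃ x = x * (h₁ x + l ^ 2 * f x) - (3 + r₁ + r₂) * (x ^ 2 * f₂ x)
        - ((r₁ + 1) * (r₂ + 1) - l ^ 2 * x) * (x * f₁ x) := by
      rw [← hstein' x hx]; ring
    have b1 : |(r₁ + 1) * (r₂ + 1) - l ^ 2 * x| ≤ (r₁ + 1) * (r₂ + 1) + l ^ 2 * x := by
      refine (abs_sub _ _).trans (le_of_eq ?_)
      rw [abs_of_pos (by positivity), abs_of_nonneg (by positivity)]
    have b2 : |h₁ x + l ^ 2 * f x| ≤ C₁ + l ^ 2 * C := by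
      refine (abs_add_le _ _).trans ?_
      rw [abs_mul, abs_of_nonneg (sq_nonneg l)]
      gcongr
      · exact hC₁ x hx
      · exact hC x hx
    have hx1 : x ≤ 1 + x ^ 2 := by nlinarith [sq_nonneg (x - 1)]
    have hx2 : 1 + x ≤ 2 * (1 + x ^ 2) := by nlinarith [sq_nonneg (x - 1)]
    have hx3 : x * (1 + x) ≤ 2 * (1 + x ^ 2) := by nlinarith [sq_nonneg (x - 1)]
    rw [e]
    calc _ ≤ |x * (h₁ x + l ^ 2 * f x)| + |(3 + r₁ + r₂) * (x ^ 2 * f₂ x)|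
            + |((r₁ + 1) * (r₂ + 1) - l ^ 2 * x) * (x * f₁ x)| :=
          (abs_sub _ _).trans (add_le_add_left (abs_sub _ _) _)
      _ = x * |h₁ x + l ^ 2 * f x| + (3 + r₁ + r₂) * |x ^ 2 * f₂ x|
            + |(r₁ + 1) * (r₂ + 1) - l ^ 2 * x| * |x * f₁ x| := by
          rw [abs_mul x (h₁ x + _), abs_of_pos hx0, abs_mul (3 + r₁ + r₂),
            abs_of_pos (by positivity : 0 < 3 + r₁ + r₂), abs_mul (_ - _)]
      _ ≤ x * (C₁ + l ^ 2 * C) + (3 + r₁ + r₂) * (K₂ * (1 + x))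
            + ((r₁ + 1) * (r₂ + 1) + l ^ 2 * x) * (K₁ * (1 + x)) := by
          gcongr
          · exact hb2 x hx
          · exact hb1 x hx
      _ = x * (C₁ + l ^ 2 * C) + (1 + x) * ((3 + r₁ + r₂) * K₂)
            + (1 + x) * ((r₁ + 1) * (r₂ + 1) * K₁) + (x * (1 + x)) * (l ^ 2 * K₁) := by ring
      _ ≤ (1 + x ^ 2) * (C₁ + l ^ 2 * C) + (2 * (1 + x ^ 2)) * ((3 + r₁ + r₂) * K₂)
            + (2 * (1 + x ^ 2)) * ((r₁ + 1) * (r₂ + 1) * K₁)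
            + (2 * (1 + x ^ 2)) * (l ^ 2 * K₁) := by gcongr
      _ = _ := by ring
  refine ⟨2 * K₁ + 2 * K₂ + K₃, by positivity, fun x hx => ?_⟩
  have hx0 : 0 < x := hx
  have hx2 : 1 + x ≤ 2 * (1 + x ^ 2) := by nlinarith [sq_nonneg (x - 1)]
  -- Multiplying by `x` turns the target `x⁻¹ + x` into `1 + x ^ 2`.
  have red : ∀ t L : ℝ, |x * t| ≤ L * (1 + x ^ 2) → L ≤ 2 * K₁ + 2 * K₂ + K₃ →
      |t| ≤ (2 * K₁ + 2 * K₂ + K₃) * (x⁻¹ + x) := by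
    intro t L ht hL
    rw [abs_mul, abs_of_pos hx0] at ht
    have e : (2 * K₁ + 2 * K₂ + K₃) * (x⁻¹ + x)
        = (2 * K₁ + 2 * K₂ + K₃) * (1 + x ^ 2) / x := by field_simp
    rw [e, le_div_iff₀ hx0]
    have := mul_le_mul_of_nonneg_right hL (by positivity : 0 ≤ 1 + x ^ 2)
    linarith
  refine ⟨red _ (2 * K₁) ?_ (by linarith), red _ (2 * K₂) ?_ (by linarith),
    red _ K₃ ?_ (by linarith)⟩
  · refine (hb1 x hx).trans ?_
    nlinarith
  · rw [show x * (x * f₂ x) = x ^ 2 * f₂ x by ring]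
    refine (hb2 x hx).trans ?_
    nlinarith
  · rw [show x * (x ^ 2 * f₃ x) = x ^ 3 * f₃ x by ring]
    exact hb3 x hx

/-! ### The mean-zero property -/

/-- If `f` is a bounded solution of the `PG(r₁, r₂, λ)` Stein equation with test function `h`,
then the test function `h' + λ² f` has mean zero with respect to the product
`Y = Y₁ Y₂` of independent `Γ(r₁+1, λ)` and `Γ(r₂+1, λ)` random variables. -/
theorem shifted_test_function_mean_zero
    {Ω : Type*} [MeasureSpace Ω] [IsProbabilityMeasure (ℙ : Measure Ω)]
    (r₁ r₂ l : ℝ) (hr₁ : 0 < r₁) (hr₂ : 0 < r₂) (hl : 0 < l)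
    (Y₁ Y₂ : Ω → ℝ) (hY₁ : Measurable Y₁) (hY₂ : Measurable Y₂)
    (hindep : IndepFun Y₁ Y₂ ℙ)
    (hd₁ : Measure.map Y₁ ℙ = gammaMeasure (r₁ + 1) l)
    (hd₂ : Measure.map Y₂ ℙ = gammaMeasure (r₂ + 1) l)
    (h : ℝ → ℝ) (hh : ContDiffOn ℝ 1 h (Ioi 0))
    (hhbdd : ∃ C : ℝ, ∀ x ∈ Set.Ioi (0 : ℝ), |h x| ≤ C)
    (hh'bdd : ∃ C : ℝ, ∀ x ∈ Set.Ioi (0 : ℝ), |deriv h x| ≤ C)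
    (c : ℝ) (f : ℝ → ℝ) (hf : ContDiffOn ℝ 3 f (Ioi 0))
    (hfbdd : ∃ C : ℝ, ∀ x ∈ Set.Ioi (0 : ℝ), |f x| ≤ C)
    (hstein : ∀ x ∈ Set.Ioi (0 : ℝ),
      x ^ 2 * deriv (deriv f) x + (1 + r₁ + r₂) * x * deriv f x
        + (r₁ * r₂ - l ^ 2 * x) * f x = h x - c)
    (hint1 : Integrable (fun ω => Y₁ ω * Y₂ ω * deriv f (Y₁ ω * Y₂ ω)))
    (hint2 : Integrable (fun ω => (Y₁ ω * Y₂ ω) ^ 2 * iteratedDeriv 2 f (Y₁ ω * Y₂ ω)))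
    (hint3 : Integrable (fun ω => (Y₁ ω * Y₂ ω) ^ 3 * iteratedDeriv 3 f (Y₁ ω * Y₂ ω))) :
    ∫ ω, (deriv h (Y₁ ω * Y₂ ω) + l ^ 2 * f (Y₁ ω * Y₂ ω)) = 0 := by
  obtain ⟨C₀, hC₀⟩ := hhbdd
  obtain ⟨C₁, hC₁⟩ := hh'bdd
  obtain ⟨C, hC⟩ := hfbdd
  have hs₁ : 1 < r₁ + 1 := by linarith
  have hs₂ : 1 < r₂ + 1 := by linarith
  have hf1 : ContDiffOn ℝ 2 (deriv f) (Ioi 0) := hf.deriv_of_isOpen isOpen_Ioi (by norm_num)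
  have hf2 : ContDiffOn ℝ 1 (deriv (deriv f)) (Ioi 0) :=
    hf1.deriv_of_isOpen isOpen_Ioi (by norm_num)
  have hf3 : ContDiffOn ℝ 0 (deriv (deriv (deriv f))) (Ioi 0) :=
    hf2.deriv_of_isOpen isOpen_Ioi (by norm_num)
  have hh1 : ContDiffOn ℝ 0 (deriv h) (Ioi 0) := hh.deriv_of_isOpen isOpen_Ioi (by norm_num)
  have hasd : ∀ (n : WithTop ℕ∞) (u : ℝ → ℝ), n ≠ 0 → ContDiffOn ℝ n u (Ioi 0) →
      ∀ x ∈ Ioi (0 : ℝ), HasDerivAt u (deriv u x) x := fun n u hn hu x hx =>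
    ((hu.differentiableOn hn).differentiableAt (isOpen_Ioi.mem_nhds hx)).hasDerivAt
  have d0 := hasd _ f (by norm_num) hf
  have d1 := hasd _ (deriv f) (by norm_num) hf1
  have d2 := hasd _ (deriv (deriv f)) (by norm_num) hf2
  have dh := hasd _ h (by norm_num) hh
  -- The differentiated Stein equation: `f'` solves the equation with shapes `r₁ + 1`, `r₂ + 1`.
  have hstein' : ∀ x ∈ Ioi (0 : ℝ), x ^ 2 * deriv (deriv (deriv f)) x
      + (3 + r₁ + r₂) * x * deriv (deriv f) x
      + ((r₁ + 1) * (r₂ + 1) - l ^ 2 * x) * deriv f x = deriv h x + l ^ 2 * f x := by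
    intro x hx
    have hid := hasDerivAt_id x
    have hL := (((hid.pow 2).mul (d2 x hx)).add ((hid.const_mul (1 + r₁ + r₂)).mul (d1 x hx))).add
      (((hid.const_mul (l ^ 2)).const_sub (r₁ * r₂)).mul (d0 x hx))
    have hR := (dh x hx).sub_const c
    have hEq := hR.congr_of_eventuallyEq
      (Filter.eventually_of_mem (isOpen_Ioi.mem_nhds hx) fun y hy => hstein y hy)
    have := hL.unique hEq
    simp only [id, Nat.cast_ofNat, Pi.pow_apply] at this
    norm_num at this
    linarith
  obtain ⟨K, hK, hb⟩ := exists_growth_bound hr₁ hr₂ d0 d1 hC₀ hC₁ hC hstein hstein'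
  have cf := hf.continuousOn
  have c1 := hf1.continuousOn
  have c2 := hf2.continuousOn
  have c3 := hf3.continuousOn
  have ch := hh1.continuousOn
  -- With `U = x f'' + (r₂ + 1) f'`, the left side of the differentiated equation at `x y` is
  -- `(x y U' + (r₁ + 1) U - l x U) + l x (x y f'' + (r₂ + 1) f' - l y f')`.
  obtain ⟨int1, zero1⟩ := integral_prod_gamma_stein (K := (3 + r₂) * K) (j := 0) hs₁ hs₂ hl
    (V := fun x => x * deriv (deriv f) x + (r₂ + 1) * deriv f x)
    (V' := fun x => x * deriv (deriv (deriv f)) x + (2 + r₂) * deriv (deriv f) x)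
    (by
      intro x hx
      convert! ((hasDerivAt_id x).mul (d2 x hx)).add ((d1 x hx).const_mul (r₂ + 1)) using 1
      simp only [id]
      ring)
    (by fun_prop)
    (by
      intro x hx
      obtain ⟨b1, b2, b3⟩ := hb x hx
      refine (abs_add_le _ _).trans ?_
      rw [abs_mul (r₂ + 1), abs_of_pos (by linarith : 0 < r₂ + 1)]
      have := mul_le_mul_of_nonneg_left b1 (by linarith : 0 ≤ r₂ + 1)
      have h0 := (abs_nonneg _).trans b1
      linarith)
    (by
      intro x hx
      obtain ⟨b1, b2, b3⟩ := hb x hx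
      rw [show x * (x * deriv (deriv (deriv f)) x + (2 + r₂) * deriv (deriv f) x)
        = x ^ 2 * deriv (deriv (deriv f)) x + (2 + r₂) * (x * deriv (deriv f) x) by ring]
      refine (abs_add_le _ _).trans ?_
      rw [abs_mul (2 + r₂), abs_of_pos (by linarith : 0 < 2 + r₂)]
      have := mul_le_mul_of_nonneg_left b2 (by linarith : 0 ≤ 2 + r₂)
      linarith)
    (by norm_num)
  obtain ⟨int2, zero2⟩ := integral_prod_gamma_stein (K := K) (j := 1) hs₂ hs₁ hl
    (V := deriv f) (V' := deriv (deriv f)) d1 c2 (fun x hx => (hb x hx).1)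
    (fun x hx => (hb x hx).2.1) le_rfl
  have := isProbabilityMeasure_gammaMeasure (a := r₁ + 1) (by linarith) hl
  have := isProbabilityMeasure_gammaMeasure (a := r₂ + 1) (by linarith) hl
  -- The second identity has the roles of the two variables exchanged.
  rw [← integral_prod_swap] at zero2
  replace int2 := int2.swap
  have hmap : Measure.map (fun ω => (Y₁ ω, Y₂ ω)) ℙ
      = (gammaMeasure (r₁ + 1) l).prod (gammaMeasure (r₂ + 1) l) := by
    rw [← hd₁, ← hd₂]
    exact (indepFun_iff_map_prod_eq_prod_map_map hY₁.aemeasurable hY₂.aemeasurable).1 hindep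
  have hae : ∀ᵐ z ∂((gammaMeasure (r₁ + 1) l).prod (gammaMeasure (r₂ + 1) l)),
      z ∈ Ioi (0 : ℝ) ×ˢ Ioi (0 : ℝ) := gammaMeasure_prod_ae_pos _ _
  have hmeas : AEStronglyMeasurable
      (fun z : ℝ × ℝ => deriv h (z.1 * z.2) + l ^ 2 * f (z.1 * z.2))
      (Measure.map (fun ω => (Y₁ ω, Y₂ ω)) ℙ) := by
    rw [hmap, ← Measure.restrict_eq_self_of_ae_mem hae]
    refine ContinuousOn.aestronglyMeasurable ?_ (measurableSet_Ioi.prod measurableSet_Ioi)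
    have hm : MapsTo (fun z : ℝ × ℝ => z.1 * z.2) (Ioi (0 : ℝ) ×ˢ Ioi (0 : ℝ)) (Ioi 0) :=
      fun z hz => mem_Ioi.2 (mul_pos hz.1 hz.2)
    exact (ch.comp (by fun_prop) hm).add (continuousOn_const.mul (cf.comp (by fun_prop) hm))
  have htransfer := integral_map (hY₁.prodMk hY₂).aemeasurable hmeas
  rw [← htransfer, hmap]
  have hsum := integral_add int1 (int2.const_mul l)
  rw [zero1, integral_const_mul] at hsum
  simp only [Function.comp_def] at hsum
  rw [zero2, mul_zero, add_zero] at hsum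
  rw [← hsum]
  refine integral_congr_ae ?_
  filter_upwards [hae] with z hz
  obtain ⟨x, y⟩ := z
  have hxy : 0 < x * y := mul_pos hz.1 hz.2
  simp only [Prod.swap_prod_mk]
  rw [mul_comm y x, ← hstein' _ hxy]
  ring
end
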